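/- arXiv:2412.00593 — 3 statements merged into one kernel-verified Lean document; each statement's English description precedes it below -/
import Mathlib

section
/- For any real polynomial h of degree at most q, any m ≥ 1, any δ > 0, and any x with |x| < δ, the m-th derivative satisfies |h^(m)(x)| ≤ (2q / (δ √(1 − (x/δ)²)))^m · sup_{|y| ≤ δ} |h(y)|. -/
/-!
By rescaling take `δ = 1`, and write `x = cos θ`. The polynomial `F(w) = w ^ q * h((w + w⁻¹) / 2)`
has degree at most `2q` and is bounded by `B` on the unit circle, because `(w + w⁻¹) / 2` is the
real part of `w` there. The maximum principle gives `|F(w)| ≤ |w| ^ (2q) * B` for `|w| ≥ 1`.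

* For `m = 1`: if `|λ| > B` then `λ * w ^ (2q) - F` does not vanish for `|w| ≥ 1`, hence, by
  Gauss-Lucas, neither does its derivative; so `|F'| ≤ 2q * B` on the unit circle. Comparing `F'` at
  `w` and `w⁻¹` bounds the derivative of `h(cos θ)`.
* For `m ≥ 2`: the growth of `F` reads `|h(cos t)| ≤ exp(q * |Im t|) * B`. Cauchy's estimate on the
  circle of radius `(m / q) * |sin θ|` around `cos θ`, on which `|Im t| ≤ m / q`, then suffices,
  because `m! * e ^ m ≤ (2m) ^ m`. This last inequality fails for `m = 1`.
-/

open Polynomial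

section Derivatives

lemma iteratedDeriv_polynomial_eval {𝕜 : Type*} [NontriviallyNormedField 𝕜] (p : 𝕜[X]) (m : ℕ) :
    iteratedDeriv m (fun z ↦ p.eval z) = fun z ↦ (derivative^[m] p).eval z := by
  induction m with
  | zero => simp only [iteratedDeriv_zero, Function.iterate_zero, id_eq]
  | succ m ih =>
    funext z
    rw [iteratedDeriv_succ, ih, Function.iterate_succ_apply', Polynomial.deriv]

lemma iterate_derivative_comp_C_mul_X {R : Type*} [CommSemiring R] (p : R[X]) (a : R) (m : ℕ) :
    derivative^[m] (p.comp (C a * X)) = C (a ^ m) * (derivative^[m] p).comp (C a * X) := by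
  induction m with
  | zero => simp
  | succ m ih =>
    rw [Function.iterate_succ_apply', ih, derivative_C_mul, derivative_comp, derivative_C_mul_X,
      Function.iterate_succ_apply', pow_succ, C_mul, mul_assoc]

end Derivatives

section UnitCircle

lemma pow_mul_eval_inv_reflect {K : Type*} [Field K] {p : K[X]} {n : ℕ} (hp : p.natDegree ≤ n)
    {z : K} (hz : z ≠ 0) : z ^ n * (p.reflect n).eval z⁻¹ = p.eval z := by
  let : Invertible z := invertibleOfNonzero hz
  simpa only [invOf_eq_inv, mul_comm, eval₂_id] using eval₂_reflect_mul_pow (RingHom.id K) z n p hp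

lemma eval_derivative_ne_zero_of_forall_notMem {P : ℂ[X]} (hP : 0 < P.degree) {s : Set ℂ}
    (hs : Convex ℝ s) (h : ∀ w ∉ s, P.eval w ≠ 0) {z : ℂ} (hz : z ∉ s) :
    P.derivative.eval z ≠ 0 := by
  intro hz0
  have hroots : P.rootSet ℂ ⊆ s := fun w hw ↦ by
    by_contra hws
    exact h w hws (by simpa using (mem_rootSet.1 hw).2)
  have hP' : P.derivative ≠ 0 := derivative_ne_zero.2 (natDegree_pos_iff_degree_pos.2 hP).ne'
  have hmem : z ∈ P.derivative.rootSet ℂ := mem_rootSet.2 ⟨hP', by simpa using hz0⟩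
  exact hz (convexHull_min hroots hs (rootSet_derivative_subset_convexHull_rootSet hP hmem))

variable {P : ℂ[X]} {n : ℕ} {B : ℝ}

lemma norm_eval_reflect_le_of_norm_le_one (hP : P.natDegree ≤ n)
    (hB : ∀ w : ℂ, ‖w‖ = 1 → ‖P.eval w‖ ≤ B) {z : ℂ} (hz : ‖z‖ ≤ 1) :
    ‖(P.reflect n).eval z‖ ≤ B := by
  refine Complex.norm_le_of_forall_mem_frontier_norm_le (U := Metric.ball 0 1)
    Metric.isBounded_ball (P.reflect n).differentiable.diffContOnCl (fun w hw ↦ ?_) ?_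
  · have hw1 : ‖w‖ = 1 := by simpa [frontier_ball] using hw
    have hw0 : w⁻¹ ≠ 0 := inv_ne_zero (norm_ne_zero_iff.1 (by simp [hw1]))
    have hw1' : ‖w⁻¹‖ = 1 := by rw [norm_inv, hw1, inv_one]
    simpa [← pow_mul_eval_inv_reflect hP hw0, hw1] using hB w⁻¹ hw1'
  · simpa [closure_ball] using hz

lemma norm_eval_le_norm_pow_mul (hP : P.natDegree ≤ n)
    (hB : ∀ w : ℂ, ‖w‖ = 1 → ‖P.eval w‖ ≤ B) {z : ℂ} (hz : 1 ≤ ‖z‖) :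
    ‖P.eval z‖ ≤ ‖z‖ ^ n * B := by
  have hz0 : z ≠ 0 := norm_pos_iff.1 (one_pos.trans_le hz)
  have hinv : ‖z⁻¹‖ ≤ 1 := by rw [norm_inv]; exact inv_le_one_of_one_le₀ hz
  rw [← pow_mul_eval_inv_reflect hP hz0, norm_mul, norm_pow]
  gcongr
  exact norm_eval_reflect_le_of_norm_le_one hP hB hinv

lemma norm_coeff_le_of_forall_norm_eq_one (hP : P.natDegree ≤ n)
    (hB : ∀ w : ℂ, ‖w‖ = 1 → ‖P.eval w‖ ≤ B) : ‖P.coeff n‖ ≤ B := by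
  have h0 := norm_eval_reflect_le_of_norm_le_one hP hB (z := 0) (by simp)
  rwa [← coeff_zero_eq_eval_zero, coeff_reflect, revAt_zero] at h0

theorem norm_eval_derivative_le_of_forall_norm_eq_one (hP : P.natDegree ≤ n)
    (hB : ∀ w : ℂ, ‖w‖ = 1 → ‖P.eval w‖ ≤ B) {z : ℂ} (hz : 1 ≤ ‖z‖) :
    ‖P.derivative.eval z‖ ≤ n * ‖z‖ ^ (n - 1) * B := by
  rcases n.eq_zero_or_pos with rfl | hn
  · simp [derivative_of_natDegree_zero (Nat.le_zero.1 hP)]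
  by_contra! hlt
  have hz0 : z ≠ 0 := norm_pos_iff.1 (one_pos.trans_le hz)
  have hd0 : (n : ℂ) * z ^ (n - 1) ≠ 0 :=
    mul_ne_zero (Nat.cast_ne_zero.2 hn.ne') (pow_ne_zero _ hz0)
  set c : ℂ := P.derivative.eval z / (n * z ^ (n - 1)) with hc
  have hBc : B < ‖c‖ := by
    rw [hc, norm_div, lt_div_iff₀ (norm_pos_iff.2 hd0)]
    simpa [mul_comm] using hlt
  set G : ℂ[X] := C c * X ^ n - P with hG
  have hcoeff : G.coeff n ≠ 0 := fun h0 ↦ by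
    have hPc : P.coeff n = c := by simpa [hG, sub_eq_zero, eq_comm (a := c)] using h0
    exact (hPc ▸ norm_coeff_le_of_forall_norm_eq_one hP hB).not_gt hBc
  have hdeg : 0 < G.degree :=
    natDegree_pos_iff_degree_pos.1 (hn.trans_le (le_natDegree_of_ne_zero hcoeff))
  have hGne : ∀ w ∉ Metric.ball (0 : ℂ) 1, G.eval w ≠ 0 := fun w hw h0 ↦ by
    have hw1 : 1 ≤ ‖w‖ := by simpa using hw
    have hPw : P.eval w = c * w ^ n := by simpa [hG, sub_eq_zero, eq_comm (a := c * w ^ n)] using h0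
    have hle := norm_eval_le_norm_pow_mul hP hB hw1
    rw [hPw, norm_mul, norm_pow, mul_comm] at hle
    exact (le_of_mul_le_mul_left hle (by positivity)).not_gt hBc
  refine eval_derivative_ne_zero_of_forall_notMem hdeg (convex_ball 0 1) hGne (by simpa using hz) ?_
  rw [hG, derivative_sub, derivative_C_mul_X_pow, eval_sub, eval_C_mul, eval_X_pow, mul_assoc, hc,
    div_mul_cancel₀ _ hd0, sub_self]

end UnitCircle

section JoukowskyLift

/-- The polynomial `w ^ q * h((w + w⁻¹) / 2)`, for `h` of degree at most `q`. It turns a polynomial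
on the segment `[-1, 1]` into one on the unit circle. -/
noncomputable def joukowskyLift {K : Type*} [Field K] (q : ℕ) (h : K[X]) : K[X] :=
  ∑ i ∈ Finset.range (q + 1), C (h.coeff i) * (C 2⁻¹ * (X ^ 2 + 1)) ^ i * X ^ (q - i)

variable {q : ℕ} {B : ℝ}

lemma natDegree_joukowskyLift_le {K : Type*} [Field K] (q : ℕ) (h : K[X]) :
    (joukowskyLift q h).natDegree ≤ 2 * q := by
  refine natDegree_sum_le_of_forall_le _ _ fun i hi ↦ ?_
  have hi' : i ≤ q := Nat.lt_succ_iff.1 (Finset.mem_range.1 hi)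
  have hterm : (C (h.coeff i) * (C 2⁻¹ * (X ^ 2 + 1)) ^ i * X ^ (q - i)).natDegree
      ≤ i * 2 + (q - i) := by
    compute_degree
  omega

lemma eval_joukowskyLift {K : Type*} [Field K] {h : K[X]} (hq : h.natDegree ≤ q) {w : K}
    (hw : w ≠ 0) : (joukowskyLift q h).eval w = w ^ q * h.eval ((w + w⁻¹) / 2) := by
  rw [joukowskyLift, eval_finsetSum, eval_eq_sum_range' (Nat.lt_succ_of_le hq), Finset.mul_sum]
  refine Finset.sum_congr rfl fun i hi ↦ ?_
  have hi' : i ≤ q := Nat.lt_succ_iff.1 (Finset.mem_range.1 hi)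
  have hbase : 2⁻¹ * (w ^ 2 + 1) = w * ((w + w⁻¹) / 2) := by
    rw [← mul_div_assoc, mul_add w, mul_inv_cancel₀ hw]
    ring
  simp only [eval_mul, eval_C, eval_pow, eval_add, eval_X, eval_one]
  rw [hbase, mul_pow, ← pow_mul_pow_sub w hi']
  ring

lemma mul_eval_derivative_joukowskyLift {h : ℂ[X]} (hq : h.natDegree ≤ q) {w : ℂ} (hw : w ≠ 0) :
    w * (joukowskyLift q h).derivative.eval w =
      w ^ q * (q * h.eval ((w + w⁻¹) / 2) +
        h.derivative.eval ((w + w⁻¹) / 2) * ((w - w⁻¹) / 2)) := by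
  have hJ : HasDerivAt (fun z : ℂ ↦ (z + z⁻¹) / 2) ((1 + -(w ^ 2)⁻¹) / 2) w :=
    ((hasDerivAt_id w).add (hasDerivAt_inv hw)).div_const 2
  have hprod := (hasDerivAt_pow q w).mul ((h.hasDerivAt _).comp w hJ)
  have heq : (joukowskyLift q h).eval =ᶠ[nhds w] fun z ↦ z ^ q * h.eval ((z + z⁻¹) / 2) := by
    filter_upwards [isOpen_ne.mem_nhds hw] with z hz using eval_joukowskyLift hq hz
  rw [((joukowskyLift q h).hasDerivAt w).unique (hprod.congr_of_eventuallyEq heq)]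
  have hpow : (q : ℂ) * w ^ (q - 1) * w = q * w ^ q := by
    rcases q with _ | q
    · simp
    · rw [Nat.add_sub_cancel, mul_assoc, ← pow_succ]
  have hinv : w * ((1 + -(w ^ 2)⁻¹) / 2) = (w - w⁻¹) / 2 := by field_simp; ring
  simp only [Function.comp_apply]
  linear_combination h.eval ((w + w⁻¹) / 2) * hpow +
    w ^ q * h.derivative.eval ((w + w⁻¹) / 2) * hinv

variable {h : ℂ[X]}

lemma norm_eval_joukowskyLift_le (hq : h.natDegree ≤ q)
    (hB : ∀ y : ℝ, |y| ≤ 1 → ‖h.eval (y : ℂ)‖ ≤ B) {w : ℂ} (hw : ‖w‖ = 1) :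
    ‖(joukowskyLift q h).eval w‖ ≤ B := by
  have hw0 : w ≠ 0 := norm_ne_zero_iff.1 (by simp [hw])
  have hre : (w + w⁻¹) / 2 = (w.re : ℂ) := by
    rw [Complex.inv_eq_conj hw, ← Complex.re_eq_add_conj]
  rw [eval_joukowskyLift hq hw0, hre, norm_mul, norm_pow, hw, one_pow, one_mul]
  exact hB _ (hw ▸ Complex.abs_re_le_norm w)

theorem norm_eval_cos_le (hq : h.natDegree ≤ q)
    (hB : ∀ y : ℝ, |y| ≤ 1 → ‖h.eval (y : ℂ)‖ ≤ B) (t : ℂ) :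
    ‖h.eval (Complex.cos t)‖ ≤ Real.exp (q * |t.im|) * B := by
  wlog ht : t.im ≤ 0 generalizing t
  · simpa using this (-t) (by simpa using (not_le.1 ht).le)
  set w := Complex.exp (t * Complex.I) with hw
  have hw0 : w ≠ 0 := Complex.exp_ne_zero _
  have hnorm : ‖w‖ = Real.exp |t.im| := by simp [hw, Complex.norm_exp, abs_of_nonpos ht]
  have hcos : (w + w⁻¹) / 2 = Complex.cos t := by
    rw [hw, ← Complex.exp_neg, ← neg_mul, Complex.cos]
  have hgrowth := norm_eval_le_norm_pow_mul (natDegree_joukowskyLift_le q h)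
    (fun _ ↦ norm_eval_joukowskyLift_le hq hB) (z := w)
    (by rw [hnorm]; exact Real.one_le_exp (abs_nonneg _))
  rw [eval_joukowskyLift hq hw0, hcos, norm_mul, norm_pow, two_mul, pow_add, mul_assoc] at hgrowth
  simpa [hnorm, ← Real.exp_nat_mul] using le_of_mul_le_mul_left hgrowth (by positivity)

lemma norm_eval_derivative_mul_le_of_norm_eq_one (hq : h.natDegree ≤ q)
    (hB : ∀ y : ℝ, |y| ≤ 1 → ‖h.eval (y : ℂ)‖ ≤ B) {w : ℂ} (hw : ‖w‖ = 1) :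
    ‖h.derivative.eval ((w + w⁻¹) / 2) * ((w - w⁻¹) / 2)‖ ≤ 2 * q * B := by
  set T := q * h.eval ((w + w⁻¹) / 2)
  set T' := h.derivative.eval ((w + w⁻¹) / 2) * ((w - w⁻¹) / 2)
  have hbound {u : ℂ} (hu : ‖u‖ = 1) : ‖q * h.eval ((u + u⁻¹) / 2) +
      h.derivative.eval ((u + u⁻¹) / 2) * ((u - u⁻¹) / 2)‖ ≤ 2 * q * B := by
    have hu0 : u ≠ 0 := norm_ne_zero_iff.1 (by simp [hu])
    have hF := norm_eval_derivative_le_of_forall_norm_eq_one (natDegree_joukowskyLift_le q h)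
      (fun _ ↦ norm_eval_joukowskyLift_le hq hB) hu.ge
    have hnorm := congrArg norm (mul_eval_derivative_joukowskyLift hq hu0)
    simp only [norm_mul, norm_pow, hu, one_pow, one_mul] at hnorm
    simpa [hu, hnorm] using hF
  have hadd : ‖T + T'‖ ≤ 2 * q * B := hbound hw
  have hsub : ‖T - T'‖ ≤ 2 * q * B := by
    have hinv := hbound (u := w⁻¹) (by rw [norm_inv, hw, inv_one])
    rwa [inv_inv, add_comm w⁻¹, ← neg_sub w, neg_div, mul_neg, ← sub_eq_add_neg] at hinv
  calc ‖T'‖ = ‖(T + T') - (T - T')‖ / 2 := by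
        rw [add_sub_sub_cancel, ← two_mul, norm_mul 2, Complex.norm_ofNat]
        ring
    _ ≤ (‖T + T'‖ + ‖T - T'‖) / 2 := by gcongr; exact norm_sub_le _ _
    _ ≤ 2 * q * B := by linarith

lemma norm_eval_derivative_cos_mul_abs_sin_le (hq : h.natDegree ≤ q)
    (hB : ∀ y : ℝ, |y| ≤ 1 → ‖h.eval (y : ℂ)‖ ≤ B) (θ : ℝ) :
    ‖h.derivative.eval (Real.cos θ : ℂ)‖ * |Real.sin θ| ≤ 2 * q * B := by
  have hw := norm_eval_derivative_mul_le_of_norm_eq_one hq hB (Complex.norm_exp_ofReal_mul_I θ)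
  have hcos : (Complex.exp (θ * Complex.I) + (Complex.exp (θ * Complex.I))⁻¹) / 2 =
      (Real.cos θ : ℂ) := by
    rw [← Complex.exp_neg, ← neg_mul, Complex.ofReal_cos, Complex.cos]
  have hsin : (Complex.exp (θ * Complex.I) - (Complex.exp (θ * Complex.I))⁻¹) / 2 =
      (Real.sin θ : ℂ) * Complex.I := by
    rw [← Complex.exp_neg, ← neg_mul, Complex.exp_mul_I, Complex.exp_mul_I, Complex.cos_neg,
      Complex.sin_neg, Complex.ofReal_sin]
    ring
  rwa [hcos, hsin, norm_mul, norm_mul, Complex.norm_I, mul_one, Complex.norm_real,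
    Real.norm_eq_abs] at hw

end JoukowskyLift

section CauchyEstimate

lemma abs_im_mul_abs_sin_le_norm_cos_sub_cos (t : ℂ) (θ : ℝ) :
    |t.im| * |Real.sin θ| ≤ ‖Complex.cos t - Real.cos θ‖ := by
  have hsplit : Complex.cos t - Real.cos θ =
      ((Real.cos t.re * Real.cosh t.im - Real.cos θ : ℝ) : ℂ)
        + ((-(Real.sin t.re * Real.sinh t.im) : ℝ) : ℂ) * Complex.I := by
    rw [Complex.cos_eq]
    push_cast
    ring
  have hnormSq : ‖Complex.cos t - Real.cos θ‖ ^ 2 =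
      (Real.cos t.re - Real.cosh t.im * Real.cos θ) ^ 2
        + (Real.sinh t.im * Real.sin θ) ^ 2 := by
    rw [hsplit, ← Complex.normSq_eq_norm_sq, Complex.normSq_add_mul_I]
    linear_combination Real.sinh t.im ^ 2 * Real.sin_sq_add_cos_sq t.re
      + (Real.cos t.re ^ 2 - Real.cos θ ^ 2) * Real.cosh_sq t.im
      - Real.sinh t.im ^ 2 * Real.sin_sq_add_cos_sq θ
  have hsinh : |t.im| ≤ |Real.sinh t.im| := by
    rw [Real.abs_sinh]
    exact Real.self_le_sinh_iff.2 (abs_nonneg _)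
  calc |t.im| * |Real.sin θ| ≤ |Real.sinh t.im| * |Real.sin θ| := by gcongr
    _ = |Real.sinh t.im * Real.sin θ| := (abs_mul _ _).symm
    _ ≤ ‖Complex.cos t - Real.cos θ‖ := by
      refine abs_le_of_sq_le_sq ?_ (norm_nonneg _)
      rw [hnormSq]
      exact le_add_of_nonneg_left (sq_nonneg _)

lemma two_mul_pow_self_le_add_one_pow {m : ℕ} (hm : m ≠ 0) :
    2 * (m : ℝ) ^ m ≤ (m + 1) ^ m := by
  have hm0 : (0 : ℝ) < m := by positivity
  calc 2 * (m : ℝ) ^ m = (1 + m * (1 / m)) * m ^ m := by rw [mul_one_div_cancel hm0.ne']; norm_num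
    _ ≤ (1 + 1 / m) ^ m * m ^ m := by
      gcongr
      exact one_add_mul_le_pow (by linarith [one_div_pos.2 hm0]) m
    _ = (m + 1) ^ m := by rw [← mul_pow, add_mul, one_mul, one_div_mul_cancel hm0.ne']

lemma factorial_mul_exp_le_two_mul_pow {m : ℕ} (hm : 2 ≤ m) :
    (m.factorial : ℝ) * Real.exp m ≤ (2 * m) ^ m := by
  have he := Real.exp_one_lt_d9
  induction m, hm using Nat.le_induction with
  | base =>
    have h2 : Real.exp (2 : ℕ) = Real.exp 1 ^ 2 := by rw [← Real.exp_nat_mul, mul_one]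
    rw [h2, Nat.factorial_two]
    push_cast
    nlinarith [Real.exp_pos 1]
  | succ m hm ih =>
    have hpow : 2 * (m : ℝ) ^ m ≤ (m + 1) ^ m :=
      two_mul_pow_self_le_add_one_pow (by omega)
    rw [Nat.factorial_succ]
    push_cast
    calc ((m : ℝ) + 1) * m.factorial * Real.exp (m + 1)
        = (m.factorial * Real.exp m) * ((m + 1) * Real.exp 1) := by rw [Real.exp_add]; ring
      _ ≤ (2 * m) ^ m * ((m + 1) * 4) := by gcongr; linarith
      _ = 2 ^ m * (2 * (m : ℝ) ^ m) * (2 * (m + 1)) := by ring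
      _ ≤ 2 ^ m * (m + 1) ^ m * (2 * (m + 1)) := by gcongr
      _ = (2 * (m + 1)) ^ (m + 1) := by rw [← mul_pow, ← pow_succ]

variable {q : ℕ} {h : ℂ[X]} {B : ℝ}

lemma norm_eval_iterate_derivative_cos_mul_pow_le (hq : h.natDegree ≤ q)
    (hB : ∀ y : ℝ, |y| ≤ 1 → ‖h.eval (y : ℂ)‖ ≤ B) (m : ℕ) {θ r : ℝ} (hθ : Real.sin θ ≠ 0)
    (hr : 0 < r) :
    ‖(derivative^[m] h).eval (Real.cos θ : ℂ)‖ * (r * |Real.sin θ|) ^ m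
      ≤ m.factorial * (Real.exp (q * r) * B) := by
  have hB0 : 0 ≤ B := (norm_nonneg _).trans (hB 0 (by simp))
  have hR : 0 < r * |Real.sin θ| := by positivity
  have hsphere : ∀ z ∈ Metric.sphere (Real.cos θ : ℂ) (r * |Real.sin θ|),
      ‖h.eval z‖ ≤ Real.exp (q * r) * B := fun z hz ↦ by
    obtain ⟨t, rfl⟩ := Complex.cos_surjective z
    have him := abs_im_mul_abs_sin_le_norm_cos_sub_cos t θ
    rw [← dist_eq_norm, Metric.mem_sphere.1 hz] at him
    have him' : |t.im| ≤ r := le_of_mul_le_mul_right him (abs_pos.2 hθ)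
    exact (norm_eval_cos_le hq hB t).trans (by gcongr)
  have hcauchy := Complex.norm_iteratedDeriv_le_of_forall_mem_sphere_norm_le m hR
    h.differentiable.diffContOnCl hsphere
  rwa [iteratedDeriv_polynomial_eval, le_div_iff₀ (pow_pos hR m)] at hcauchy

lemma norm_eval_iterate_derivative_cos_mul_abs_sin_pow_le_of_two_le (hq : h.natDegree ≤ q)
    (hB : ∀ y : ℝ, |y| ≤ 1 → ‖h.eval (y : ℂ)‖ ≤ B) {m : ℕ} (hm : 2 ≤ m) (θ : ℝ) :
    ‖(derivative^[m] h).eval (Real.cos θ : ℂ)‖ * |Real.sin θ| ^ m ≤ (2 * q) ^ m * B := by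
  have hB0 : 0 ≤ B := (norm_nonneg _).trans (hB 0 (by simp))
  have hm0 : m ≠ 0 := by omega
  rcases eq_or_ne (Real.sin θ) 0 with hθ | hθ
  · rw [hθ, abs_zero, zero_pow hm0, mul_zero]
    positivity
  rcases q.eq_zero_or_pos with rfl | hq0
  · rw [iterate_derivative_eq_zero (by omega), eval_zero, norm_zero, zero_mul]
    positivity
  have hq0' : (0 : ℝ) < q := by exact_mod_cast hq0
  have hcauchy := norm_eval_iterate_derivative_cos_mul_pow_le hq hB m hθ
    (r := m / q) (by positivity)
  rw [mul_div_cancel₀ (m : ℝ) hq0'.ne'] at hcauchy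
  refine le_of_mul_le_mul_right ?_ (show 0 < ((m : ℝ) / q) ^ m by positivity)
  calc ‖(derivative^[m] h).eval (Real.cos θ : ℂ)‖ * |Real.sin θ| ^ m * (m / q) ^ m
      = ‖(derivative^[m] h).eval (Real.cos θ : ℂ)‖ * (m / q * |Real.sin θ|) ^ m := by ring
    _ ≤ m.factorial * Real.exp m * B := by rwa [mul_assoc]
    _ ≤ (2 * m) ^ m * B := by gcongr; exact factorial_mul_exp_le_two_mul_pow hm
    _ = (2 * q) ^ m * B * (m / q) ^ m := by
      rw [mul_right_comm, ← mul_pow, mul_assoc, mul_div_cancel₀ (m : ℝ) hq0'.ne']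

theorem norm_eval_iterate_derivative_cos_mul_abs_sin_pow_le (hq : h.natDegree ≤ q)
    (hB : ∀ y : ℝ, |y| ≤ 1 → ‖h.eval (y : ℂ)‖ ≤ B) (m : ℕ) (θ : ℝ) :
    ‖(derivative^[m] h).eval (Real.cos θ : ℂ)‖ * |Real.sin θ| ^ m ≤ (2 * q) ^ m * B := by
  match m with
  | 0 => simpa using hB _ (Real.abs_cos_le_one θ)
  | 1 => simpa using norm_eval_derivative_cos_mul_abs_sin_le hq hB θ
  | m + 2 => exact norm_eval_iterate_derivative_cos_mul_abs_sin_pow_le_of_two_le hq hB (by omega) θ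

end CauchyEstimate

lemma norm_eval_iterate_derivative_le_of_abs_lt_one {q : ℕ} {h : ℂ[X]} (hq : h.natDegree ≤ q)
    {B : ℝ} (hB : ∀ y : ℝ, |y| ≤ 1 → ‖h.eval (y : ℂ)‖ ≤ B) (m : ℕ) {x : ℝ} (hx : |x| < 1) :
    ‖(derivative^[m] h).eval (x : ℂ)‖ ≤ (2 * q / Real.sqrt (1 - x ^ 2)) ^ m * B := by
  have hsqrt : 0 < Real.sqrt (1 - x ^ 2) :=
    Real.sqrt_pos.2 (sub_pos.2 ((sq_lt_one_iff_abs_lt_one x).2 hx))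
  have hθ := norm_eval_iterate_derivative_cos_mul_abs_sin_pow_le hq hB m (Real.arccos x)
  rw [Real.cos_arccos (abs_lt.1 hx).1.le (abs_lt.1 hx).2.le, Real.sin_arccos,
    abs_of_pos hsqrt] at hθ
  rwa [div_pow, div_mul_eq_mul_div, le_div_iff₀ (pow_pos hsqrt m)]

theorem stmt_2_general (q : ℕ) (h : ℂ[X]) (hq : h.natDegree ≤ q) (m : ℕ) (δ x : ℝ) (hx : |x| < δ)
    (B : ℝ) (hB : ∀ y : ℝ, |y| ≤ δ → ‖h.eval (y : ℂ)‖ ≤ B) :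
    ‖iteratedDeriv m (fun z ↦ h.eval z) (x : ℂ)‖ ≤
      (2 * (q : ℝ) / (δ * Real.sqrt (1 - (x / δ) ^ 2))) ^ m * B := by
  have hδ : 0 < δ := (abs_nonneg x).trans_lt hx
  have hδ0 : (δ : ℂ) ≠ 0 := by exact_mod_cast hδ.ne'
  have hdeg : (h.comp (C (δ : ℂ) * X)).natDegree ≤ q := by
    rwa [natDegree_comp, natDegree_C_mul_X _ hδ0, mul_one]
  have hbound : ∀ y : ℝ, |y| ≤ 1 → ‖(h.comp (C (δ : ℂ) * X)).eval (y : ℂ)‖ ≤ B := fun y hy ↦ by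
    have hy' : |δ * y| ≤ δ := by
      rw [abs_mul, abs_of_pos hδ]
      exact mul_le_of_le_one_right hδ.le hy
    simpa using hB (δ * y) hy'
  have hx1 : |x / δ| < 1 := by rwa [abs_div, abs_of_pos hδ, div_lt_one hδ]
  have hunit := norm_eval_iterate_derivative_le_of_abs_lt_one hdeg hbound m hx1
  rw [iterate_derivative_comp_C_mul_X, eval_C_mul, norm_mul] at hunit
  have hscale : δ ^ m * ‖(derivative^[m] h).eval (x : ℂ)‖ ≤
      (2 * q / Real.sqrt (1 - (x / δ) ^ 2)) ^ m * B := by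
    simpa [mul_div_cancel₀ _ hδ0, abs_of_pos hδ] using hunit
  rw [iteratedDeriv_polynomial_eval, mul_comm δ, ← div_div, div_pow _ δ, div_mul_eq_mul_div,
    le_div_iff₀' (pow_pos hδ m)]
  exact hscale

/-- **Bernstein's inequality for higher derivatives.**  If `h` is a real polynomial of
degree at most `q` bounded by `B` on `[-δ, δ]`, then for `|x| < δ` and `m ≥ 1`,
`|h^(m)(x)| ≤ (2q / (δ √(1 - (x/δ)²)))^m * B`. -/
theorem stmt_2 (q : ℕ) (h : Polynomial ℝ) (hq : h.natDegree ≤ q)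
    (m : ℕ) (hm : 1 ≤ m) (δ : ℝ) (hδ : 0 < δ) (x : ℝ) (hx : |x| < δ)
    (B : ℝ) (hB : ∀ y : ℝ, |y| ≤ δ → |h.eval y| ≤ B) :
    |iteratedDeriv m (fun y => h.eval y) x| ≤
      (2 * (q : ℝ) / (δ * Real.sqrt (1 - (x / δ) ^ 2))) ^ m * B := by
  have hcast (p : ℝ[X]) (y : ℝ) : ‖(p.map Complex.ofRealHom).eval (y : ℂ)‖ = |p.eval y| := by
    rw [← Complex.ofRealHom_eq_coe, eval_map_apply, Complex.ofRealHom_eq_coe, Complex.norm_real,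
      Real.norm_eq_abs]
  simpa only [iteratedDeriv_polynomial_eval, iterate_derivative_map, hcast] using
    stmt_2_general q (h.map Complex.ofRealHom) (natDegree_map_le.trans hq) m δ x hx B
      (by simpa only [hcast] using hB)
end

section
/- Let ν be a linear functional on the space of real polynomials such that there exist constants C, K ≥ 0 and an integer m ≥ 0 with |ν(h)| ≤ C q^m sup_{|x| ≤ K} |h(x)| for all polynomials h of degree at most q and all q. Then ν extends to a compactly supported distribution on ℝ satisfying |ν(h)| ≲ max_{0 ≤ k ≤ m+1} sup_{|x| ≤ K} |h^(k)(x)| for all smooth h. -/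
/-!
Substituting `x = K cos θ` turns a polynomial `h` into a cosine polynomial `∑ aₙ cos (n θ)`, where
the `aₙ` are the Chebyshev coefficients of `x ↦ h (K x)`, and the growth condition says that the
`n`-th Chebyshev polynomial of `x / K` is mapped to something of size `O(n ^ m)`. Hence `|ν h|` is
controlled by `∑ n ^ m |aₙ| = ∑ n⁻¹ (n ^ (m + 1) |aₙ|)`. By Cauchy–Schwarz and Parseval, this costs
only the supremum of the `(m + 1)`-st derivative of `θ ↦ h (K cos θ)`, which is bounded through the
derivatives of `h` of order at most `m + 1` on `[-K, K]`. The estimate makes `ν` a bounded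
functional of the jet of `h` on `[-K, K]`, to which Hahn–Banach applies.
-/

open Polynomial Real Module

section CosineSums

theorem integral_cos_int_mul_add {j : ℤ} (hj : j ≠ 0) (φ : ℝ) :
    ∫ θ in 0..2 * π, cos (j * θ + φ) = 0 := by
  have hj' : (j : ℝ) ≠ 0 := mod_cast hj
  rw [intervalIntegral.integral_comp_mul_add cos hj', integral_cos,
    show (j : ℝ) * (2 * π) + φ = φ + j * (2 * π) by ring, sin_add_int_mul_two_pi]
  simp

theorem integral_cos_mul_cos {n p : ℤ} (hnp : n + p ≠ 0) (φ : ℝ) :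
    ∫ θ in 0..2 * π, cos (n * θ + φ) * cos (p * θ + φ) = if n = p then π else 0 := by
  have product_to_sum (θ : ℝ) : cos (n * θ + φ) * cos (p * θ + φ) =
      1 / 2 * (cos ((n - p : ℤ) * θ + 0) + cos ((n + p : ℤ) * θ + 2 * φ)) := by
    rw [show ((n - p : ℤ) : ℝ) * θ + 0 = (n * θ + φ) - (p * θ + φ) by push_cast; ring,
      show ((n + p : ℤ) : ℝ) * θ + 2 * φ = (n * θ + φ) + (p * θ + φ) by push_cast; ring]
    linarith [two_mul_cos_mul_cos (n * θ + φ) (p * θ + φ)]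
  simp_rw [product_to_sum]
  rw [intervalIntegral.integral_const_mul, intervalIntegral.integral_add
    (Continuous.intervalIntegrable (by fun_prop) _ _)
    (Continuous.intervalIntegrable (by fun_prop) _ _), integral_cos_int_mul_add hnp]
  split_ifs with h
  · simp [h]
  · rw [integral_cos_int_mul_add (sub_ne_zero.2 h), add_zero, mul_zero]

theorem integral_sum_cos_sq (s : Finset ℕ) {b : ℕ → ℝ} (hb : b 0 = 0) (φ : ℝ) :
    ∫ θ in 0..2 * π, (∑ n ∈ s, b n * cos (n * θ + φ)) ^ 2 = π * ∑ n ∈ s, b n ^ 2 := by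
  have orthogonality (n p : ℕ) :
      ∫ θ in 0..2 * π, b n * b p * (cos (n * θ + φ) * cos (p * θ + φ)) =
        if n = p then π * b n ^ 2 else 0 := by
    rw [intervalIntegral.integral_const_mul]
    rcases eq_or_ne n 0 with rfl | hn
    · simp [hb]
    · have := integral_cos_mul_cos (n := n) (p := p) (by positivity) φ
      simp only [Int.cast_natCast, Nat.cast_inj] at this
      rw [this]
      split_ifs with h
      · rw [h]; ring
      · simp
  simp_rw [sq (Finset.sum s _), Finset.sum_mul_sum, mul_mul_mul_comm (b _)]
  rw [intervalIntegral.integral_finsetSum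
    fun _ _ => Continuous.intervalIntegrable (by fun_prop) _ _, Finset.mul_sum]
  refine Finset.sum_congr rfl fun n hn => ?_
  rw [intervalIntegral.integral_finsetSum
    fun _ _ => Continuous.intervalIntegrable (by fun_prop) _ _]
  simp_rw [orthogonality]
  simp [hn]

theorem sum_sq_le_of_abs_sum_cos_le {s : Finset ℕ} {b : ℕ → ℝ} (hb : b 0 = 0) {φ M : ℝ}
    (hM : ∀ θ : ℝ, |∑ n ∈ s, b n * cos (n * θ + φ)| ≤ M) :
    ∑ n ∈ s, b n ^ 2 ≤ 2 * M ^ 2 := by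
  refine le_of_mul_le_mul_left ?_ pi_pos
  calc π * ∑ n ∈ s, b n ^ 2
      = ∫ θ in 0..2 * π, (∑ n ∈ s, b n * cos (n * θ + φ)) ^ 2 := (integral_sum_cos_sq s hb φ).symm
    _ ≤ ∫ _ in 0..2 * π, M ^ 2 :=
        intervalIntegral.integral_mono (by positivity)
          (Continuous.intervalIntegrable (by fun_prop) _ _)
          (Continuous.intervalIntegrable (by fun_prop) _ _)
          fun θ => sq_le_sq.2 ((hM θ).trans (le_abs_self M))
    _ = π * (2 * M ^ 2) := by
        rw [intervalIntegral.integral_const, smul_eq_mul]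
        ring

theorem iteratedDeriv_sum_cos (s : Finset ℕ) (a : ℕ → ℝ) (k : ℕ) :
    iteratedDeriv k (fun θ : ℝ => ∑ n ∈ s, a n * cos (n * θ)) =
      fun θ => ∑ n ∈ s, (n : ℝ) ^ k * a n * cos (n * θ + k * (π / 2)) := by
  induction k with
  | zero => simp
  | succ k ih =>
    rw [iteratedDeriv_succ, ih]
    funext θ
    refine (HasDerivAt.fun_sum fun n _ => ?_).deriv
    have phase : HasDerivAt (fun θ : ℝ => (n : ℝ) * θ + k * (π / 2)) n θ := by
      simpa using ((hasDerivAt_id θ).const_mul (n : ℝ)).add_const (k * (π / 2))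
    refine (phase.cos.const_mul ((n : ℝ) ^ k * a n)).congr_deriv ?_
    rw [show (n : ℝ) * θ + (k + 1 : ℕ) * (π / 2) = n * θ + k * (π / 2) + π / 2 by push_cast; ring,
      cos_add_pi_div_two]
    ring

theorem sq_sum_inv_mul_le (s : Finset ℕ) (c : ℕ → ℝ) :
    (∑ n ∈ s, (n : ℝ)⁻¹ * c n) ^ 2 ≤ π ^ 2 / 6 * ∑ n ∈ s, c n ^ 2 := by
  have basel : ∑ n ∈ s, (n : ℝ)⁻¹ ^ 2 ≤ π ^ 2 / 6 := by
    simpa using sum_le_hasSum s (fun _ _ => by positivity) hasSum_zeta_two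
  refine (Finset.sum_mul_sq_le_sq_mul_sq s _ c).trans ?_
  gcongr

theorem sum_inv_mul_pow_mul_abs_le (s : Finset ℕ) (a : ℕ → ℝ) (m : ℕ) {M : ℝ}
    (hM : ∀ θ, |iteratedDeriv (m + 1) (fun θ : ℝ => ∑ n ∈ s, a n * cos (n * θ)) θ| ≤ M) :
    ∑ n ∈ s, (n : ℝ)⁻¹ * ((n : ℝ) ^ (m + 1) * |a n|) ≤ 2 * M := by
  have hM₀ : 0 ≤ M := (abs_nonneg _).trans (hM 0)
  have parseval : ∑ n ∈ s, ((n : ℝ) ^ (m + 1) * a n) ^ 2 ≤ 2 * M ^ 2 := by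
    refine sum_sq_le_of_abs_sum_cos_le (φ := (m + 1 : ℕ) * (π / 2)) (by simp) fun θ => ?_
    simpa only [iteratedDeriv_sum_cos] using hM θ
  refine le_of_sq_le_sq ?_ (by positivity)
  calc (∑ n ∈ s, (n : ℝ)⁻¹ * ((n : ℝ) ^ (m + 1) * |a n|)) ^ 2
      ≤ π ^ 2 / 6 * ∑ n ∈ s, ((n : ℝ) ^ (m + 1) * |a n|) ^ 2 := sq_sum_inv_mul_le s _
    _ = π ^ 2 / 6 * ∑ n ∈ s, ((n : ℝ) ^ (m + 1) * a n) ^ 2 := by simp_rw [mul_pow, sq_abs]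
    _ ≤ π ^ 2 / 6 * (2 * M ^ 2) := by gcongr
    _ ≤ 3.15 ^ 2 / 6 * (2 * M ^ 2) := by gcongr; exact pi_lt_d2.le
    _ ≤ (2 * M) ^ 2 := by nlinarith [sq_nonneg M]

end CosineSums

section Chebyshev

open Polynomial.Chebyshev

/-- The Chebyshev polynomials of the first kind, as a basis of the space of real polynomials. -/
noncomputable def chebyshevBasis : Basis ℕ ℝ ℝ[X] :=
  (chebyshevTsequence ℝ).basis fun n => by simp [Polynomial.Sequence.ne_zero]

theorem chebyshevBasis_apply (n : ℕ) : chebyshevBasis n = T ℝ n :=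
  Polynomial.Sequence.basis_eq_self _ _ n

theorem apply_eq_sum_chebyshevBasis_repr (ν : ℝ[X] →ₗ[ℝ] ℝ) (h : ℝ[X]) :
    ν h = ∑ n ∈ (chebyshevBasis.repr h).support, chebyshevBasis.repr h n * ν (T ℝ n) := by
  conv_lhs => rw [← chebyshevBasis.linearCombination_repr h, Finsupp.linearCombination_apply,
    Finsupp.sum, map_sum]
  simp only [map_smul, smul_eq_mul, chebyshevBasis_apply]

theorem eval_cos_eq_sum_chebyshevBasis_repr (h : ℝ[X]) (θ : ℝ) :
    h.eval (cos θ) =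
      ∑ n ∈ (chebyshevBasis.repr h).support, chebyshevBasis.repr h n * cos (n * θ) := by
  simpa using apply_eq_sum_chebyshevBasis_repr (leval (cos θ)) h

-- Trading the zeroth coefficient for the value of `h` at `1` makes the `n = 0` term vanish.
theorem apply_eq_eval_one_mul_add_sum (ν : ℝ[X] →ₗ[ℝ] ℝ) (h : ℝ[X]) :
    ν h = h.eval 1 * ν (T ℝ (0 : ℕ)) + ∑ n ∈ (chebyshevBasis.repr h).support,
      chebyshevBasis.repr h n * (ν (T ℝ n) - ν (T ℝ (0 : ℕ))) := by
  have eval_one : h.eval 1 = ∑ n ∈ (chebyshevBasis.repr h).support, chebyshevBasis.repr h n := by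
    simpa using eval_cos_eq_sum_chebyshevBasis_repr h 0
  simp only [mul_sub, Finset.sum_sub_distrib, ← Finset.sum_mul, ← eval_one]
  rw [apply_eq_sum_chebyshevBasis_repr ν h]
  ring

theorem abs_apply_le_of_abs_apply_chebyshev_le {ν : ℝ[X] →ₗ[ℝ] ℝ} {C : ℝ} {m : ℕ}
    (hν : ∀ q : ℕ, 1 ≤ q → ∀ n ≤ q, |ν (T ℝ n)| ≤ C * (q : ℝ) ^ m) {h : ℝ[X]} {M : ℝ}
    (hM : ∀ θ, |iteratedDeriv (m + 1) (fun θ => h.eval (cos θ)) θ| ≤ M) :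
    |ν h| ≤ C * (|h.eval 1| + 4 * M) := by
  set a := chebyshevBasis.repr h
  have hν₀ : |ν (T ℝ (0 : ℕ))| ≤ C := by simpa using hν 1 le_rfl 0 zero_le_one
  have hC : 0 ≤ C := (abs_nonneg _).trans hν₀
  have term_le (n : ℕ) : |a n * (ν (T ℝ n) - ν (T ℝ (0 : ℕ)))| ≤
      2 * C * ((n : ℝ)⁻¹ * ((n : ℝ) ^ (m + 1) * |a n|)) := by
    rcases n.eq_zero_or_pos with rfl | hn
    · simp
    · calc |a n * (ν (T ℝ n) - ν (T ℝ (0 : ℕ)))|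
          ≤ |a n| * (C * (n : ℝ) ^ m + C * (n : ℝ) ^ m) := by
            rw [abs_mul]
            gcongr
            exact (abs_sub _ _).trans (add_le_add (hν n hn n le_rfl) (hν n hn 0 n.zero_le))
        _ = 2 * C * ((n : ℝ)⁻¹ * ((n : ℝ) ^ (m + 1) * |a n|)) := by field_simp; ring
  have sum_le : ∑ n ∈ a.support, (n : ℝ)⁻¹ * ((n : ℝ) ^ (m + 1) * |a n|) ≤ 2 * M := by
    simp_rw [eval_cos_eq_sum_chebyshevBasis_repr h] at hM
    exact sum_inv_mul_pow_mul_abs_le _ _ m hM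
  calc |ν h|
      ≤ |h.eval 1| * |ν (T ℝ (0 : ℕ))| +
          ∑ n ∈ a.support, |a n * (ν (T ℝ n) - ν (T ℝ (0 : ℕ)))| := by
        rw [apply_eq_eval_one_mul_add_sum, ← abs_mul]
        exact (abs_add_le _ _).trans (by gcongr; exact Finset.abs_sum_le_sum_abs _ _)
    _ ≤ |h.eval 1| * C + 2 * C * (2 * M) := by
        gcongr
        refine (Finset.sum_le_sum fun n _ => term_le n).trans ?_
        rw [← Finset.mul_sum]
        gcongr
    _ = C * (|h.eval 1| + 4 * M) := by ring

end Chebyshev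

section DegreeGrowth

section Dilation

variable {R : Type*} [CommSemiring R]

/-- The dilation `h(x) ↦ h(r x)` of polynomials. -/
noncomputable def dilation (r : R) : R[X] →ₗ[R] R[X] :=
  (aeval (C r * X)).toLinearMap

theorem dilation_apply (r : R) (h : R[X]) :
    dilation r h = h.comp (C r * X) :=
  (comp_eq_aeval ..).symm

@[simp]
theorem eval_dilation (r x : R) (h : R[X]) :
    (dilation r h).eval x = h.eval (r * x) := by
  simp [dilation_apply]

theorem natDegree_dilation_le (r : R) (h : R[X]) :
    (dilation r h).natDegree ≤ h.natDegree := by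
  rw [dilation_apply]
  exact natDegree_comp_le.trans <| mul_le_of_le_one_right h.natDegree.zero_le <|
    (natDegree_C_mul_le r X).trans natDegree_X_le

end Dilation

/-- The growth condition `|ν h| ≤ C q ^ m sup_{|x| ≤ K} |h x|` for all polynomials `h` of degree at
most `q`. The supremum is expressed through its upper bounds, and `q ≥ 1` because otherwise the
condition for `m ≥ 1` would force `ν` to vanish on constants. -/
def DegreeGrowthBound (ν : ℝ[X] →ₗ[ℝ] ℝ) (C K : ℝ) (m : ℕ) : Prop :=
  ∀ q : ℕ, 1 ≤ q → ∀ h : ℝ[X], h.natDegree ≤ q →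
    ∀ B : ℝ, (∀ x : ℝ, |x| ≤ K → |h.eval x| ≤ B) → |ν h| ≤ C * (q : ℝ) ^ m * B

namespace DegreeGrowthBound

variable {ν : ℝ[X] →ₗ[ℝ] ℝ} {C K : ℝ} {m : ℕ}

theorem comp_dilation (hν : DegreeGrowthBound ν C K m) (r : ℝ) :
    DegreeGrowthBound (ν ∘ₗ dilation r) C (|r| * K) m := by
  intro q hq h hh B hB
  refine hν q hq _ ((natDegree_dilation_le r h).trans hh) B fun x hx => ?_
  rw [eval_dilation]
  exact hB _ (by rw [abs_mul]; gcongr)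

theorem abs_apply_chebyshev_le (hν : DegreeGrowthBound ν C 1 m) {q n : ℕ} (hq : 1 ≤ q)
    (hn : n ≤ q) : |ν (Chebyshev.T ℝ n)| ≤ C * (q : ℝ) ^ m := by
  simpa using hν q hq (Chebyshev.T ℝ n) (by simpa using hn) 1
    fun x hx => Chebyshev.abs_eval_T_real_le_one n hx

theorem abs_apply_one_le (hν : DegreeGrowthBound ν C K m) : |ν 1| ≤ C := by
  simpa using hν 1 le_rfl 1 (by simp) 1 (by simp)

theorem apply_eq_eval_zero_mul (hν : DegreeGrowthBound ν C 0 m) (h : ℝ[X]) :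
    ν h = h.eval 0 * ν 1 := by
  have vanishing : ν (h - Polynomial.C (h.eval 0)) = 0 := by
    simpa using hν (max 1 h.natDegree) (le_max_left _ _) (h - Polynomial.C (h.eval 0)) (by simp) 0
      fun x hx => by simp [abs_nonpos_iff.1 hx]
  rw [map_sub, sub_eq_zero] at vanishing
  rw [vanishing, ← mul_one (Polynomial.C _), ← smul_eq_C_mul, map_smul, smul_eq_mul]

theorem abs_apply_le (hν : DegreeGrowthBound ν C K m) (hK : 0 ≤ K) {h : ℝ[X]} {M : ℝ}
    (hM : ∀ θ, |iteratedDeriv (m + 1) (fun θ => h.eval (K * cos θ)) θ| ≤ M) :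
    |ν h| ≤ C * (|h.eval K| + 4 * M) := by
  rcases hK.eq_or_lt with rfl | hK
  · have hM₀ : 0 ≤ M := (abs_nonneg _).trans (hM 0)
    calc |ν h| = |h.eval 0| * |ν 1| := by rw [hν.apply_eq_eval_zero_mul, abs_mul]
      _ ≤ (|h.eval 0| + 4 * M) * C := by
          gcongr
          · linarith
          · exact hν.abs_apply_one_le
      _ = C * (|h.eval 0| + 4 * M) := mul_comm _ _
  · have hμ : DegreeGrowthBound (ν ∘ₗ dilation K⁻¹) C 1 m := by
      simpa [abs_of_pos hK, hK.ne'] using hν.comp_dilation K⁻¹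
    have dilation_inv : dilation K⁻¹ (dilation K h) = h :=
      Polynomial.funext fun x => by simp [hK.ne']
    simpa [dilation_inv] using abs_apply_le_of_abs_apply_chebyshev_le (h := dilation K h)
      (fun q hq n hn => hμ.abs_apply_chebyshev_le hq hn) (by simpa using hM)

end DegreeGrowthBound

end DegreeGrowth

section Derivatives

theorem contDiff_eval (n : WithTop ℕ∞) (h : ℝ[X]) : ContDiff ℝ n fun x => h.eval x := by
  simpa using! h.contDiff_aeval (𝕜 := ℝ) n

theorem abs_iteratedDeriv_comp_mul_cos_le {N : ℕ} {f : ℝ → ℝ} (hf : ContDiff ℝ N f) {K B : ℝ}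
    (hK : 0 ≤ K) (hB : ∀ k ≤ N, ∀ x : ℝ, |x| ≤ K → |iteratedDeriv k f x| ≤ B) (θ : ℝ) :
    |iteratedDeriv N (fun θ => f (K * cos θ)) θ| ≤ N.factorial * B * max 1 K ^ N := by
  simp only [← norm_eq_abs, ← norm_iteratedFDeriv_eq_norm_iteratedDeriv] at hB ⊢
  refine norm_iteratedFDeriv_comp_le (f := fun θ => K * cos θ) hf
    (contDiff_const.mul contDiff_cos) le_rfl θ (fun i hi => hB i hi _ ?_) fun i hi _ => ?_
  · rw [norm_mul, norm_of_nonneg hK]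
    exact mul_le_of_le_one_right hK (abs_cos_le_one θ)
  · rw [norm_iteratedFDeriv_eq_norm_iteratedDeriv, iteratedDeriv_const_mul_field, norm_mul,
      norm_of_nonneg hK]
    calc K * ‖iteratedDeriv i cos θ‖
        ≤ K := mul_le_of_le_one_right hK (abs_iteratedDeriv_cos_le_one i θ)
      _ ≤ max 1 K := le_max_right _ _
      _ ≤ max 1 K ^ i := le_self_pow₀ (le_max_left _ _) (by lia)

theorem DegreeGrowthBound.abs_apply_le_of_abs_iteratedDeriv_le {ν : ℝ[X] →ₗ[ℝ] ℝ} {C K : ℝ} {m : ℕ}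
    (hν : DegreeGrowthBound ν C K m) (hK : 0 ≤ K) {h : ℝ[X]} {B : ℝ}
    (hB : ∀ k ≤ m + 1, ∀ x : ℝ, |x| ≤ K → |iteratedDeriv k (fun x => h.eval x) x| ≤ B) :
    |ν h| ≤ C * (1 + 4 * ((m + 1).factorial * max 1 K ^ (m + 1))) * B := by
  have hC : 0 ≤ C := (abs_nonneg _).trans hν.abs_apply_one_le
  have eval_le : |h.eval K| ≤ B := by simpa using hB 0 (by lia) K (abs_of_nonneg hK).le
  calc |ν h| ≤ C * (|h.eval K| + 4 * ((m + 1).factorial * B * max 1 K ^ (m + 1))) :=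
        hν.abs_apply_le hK (abs_iteratedDeriv_comp_mul_cos_le (contDiff_eval _ h) hK hB)
    _ ≤ C * (B + 4 * ((m + 1).factorial * B * max 1 K ^ (m + 1))) := by gcongr
    _ = C * (1 + 4 * ((m + 1).factorial * max 1 K ^ (m + 1))) * B := by ring

/-- The space of `n` times continuously differentiable real functions. -/
def contDiffSubmodule (n : ℕ) : Submodule ℝ (ℝ → ℝ) where
  carrier := {f | ContDiff ℝ n f}
  add_mem' {f g} (hf : ContDiff ℝ n f) (hg : ContDiff ℝ n g) := hf.add hg
  zero_mem' := show ContDiff ℝ n fun _ => (0 : ℝ) from contDiff_const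
  smul_mem' c f (hf : ContDiff ℝ n f) := hf.const_smul c

theorem contDiffSubmodule.contDiff {n : ℕ} (f : contDiffSubmodule n) :
    ContDiff ℝ n (f : ℝ → ℝ) :=
  f.2

/-- The `n`-jet on `s` of a `C^n` function: all its derivatives up to order `n`, restricted to `s`.
They are bundled into one continuous function so that, for compact `s`, the supremum norm of the jet
is the maximum over `k ≤ n` of the suprema of the `k`-th derivative on `s`. -/
noncomputable def jet (n : ℕ) (s : Set ℝ) : contDiffSubmodule n →ₗ[ℝ] C(Fin (n + 1) × s, ℝ) where
  toFun f :=
    { toFun i := iteratedDeriv i.1 (f : ℝ → ℝ) i.2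
      continuous_toFun := by
        rw [continuous_prod_of_discrete_left]
        exact fun k => ((contDiffSubmodule.contDiff f).continuous_iteratedDeriv k
          (mod_cast k.is_le)).comp continuous_subtype_val }
  map_add' f g := by
    ext ⟨k, x⟩
    have hk : (k : WithTop ℕ∞) ≤ n := mod_cast k.is_le
    exact iteratedDeriv_add ((contDiffSubmodule.contDiff f).of_le hk).contDiffAt
      ((contDiffSubmodule.contDiff g).of_le hk).contDiffAt
  map_smul' c f := by
    ext ⟨k, x⟩
    exact iteratedDeriv_const_smul_field c _

variable {n : ℕ} {s : Set ℝ} [CompactSpace s]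

theorem norm_jet_le [Nonempty s] {f : contDiffSubmodule n} {B : ℝ}
    (hB : ∀ k ≤ n, ∀ x ∈ s, |iteratedDeriv k (f : ℝ → ℝ) x| ≤ B) : ‖jet n s f‖ ≤ B :=
  (ContinuousMap.norm_le_of_nonempty _).2 fun i => hB i.1 i.1.is_le i.2 i.2.2

theorem abs_iteratedDeriv_le_norm_jet (f : contDiffSubmodule n) {k : ℕ} (hk : k ≤ n) {x : ℝ}
    (hx : x ∈ s) : |iteratedDeriv k (f : ℝ → ℝ) x| ≤ ‖jet n s f‖ :=
  (jet n s f).norm_coe_le_norm (⟨k, Nat.lt_succ_of_le hk⟩, ⟨x, hx⟩)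

/-- The inclusion of the polynomials into the `C^n` functions. -/
noncomputable def polynomialToContDiff (n : ℕ) : ℝ[X] →ₗ[ℝ] contDiffSubmodule n where
  toFun h := ⟨fun x => h.eval x, contDiff_eval n h⟩
  map_add' _ _ := by ext; simp
  map_smul' _ _ := by ext; simp

end Derivatives

-- The hypothesis makes `ν` factor through the range of `J`, on which Hahn–Banach applies.
theorem exists_strongDual_apply_eq_of_norm_le {𝕜 E F : Type*} [RCLike 𝕜] [AddCommGroup E]
    [Module 𝕜 E] [NormedAddCommGroup F] [NormedSpace 𝕜 F] (J : E →ₗ[𝕜] F) (ν : E →ₗ[𝕜] 𝕜) {C : ℝ}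
    (hν : ∀ x, ‖ν x‖ ≤ C * ‖J x‖) : ∃ g : StrongDual 𝕜 F, ∀ x, g (J x) = ν x := by
  obtain ⟨σ, hσ⟩ := J.rangeRestrict.exists_rightInverse_of_surjective J.range_rangeRestrict
  have J_section (y : LinearMap.range J) : J (σ y) = y :=
    congrArg Subtype.val (LinearMap.congr_fun hσ y)
  let ν₀ : StrongDual 𝕜 (LinearMap.range J) := (ν ∘ₗ σ).mkContinuous C fun y => by
    simpa only [LinearMap.comp_apply, J_section, Submodule.coe_norm] using hν (σ y)
  obtain ⟨g, hg, -⟩ := exists_extension_norm_eq _ ν₀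
  refine ⟨g, fun x => ?_⟩
  have same_value : ν (σ (J.rangeRestrict x) - x) = 0 := by
    simpa [J_section] using hν (σ (J.rangeRestrict x) - x)
  rw [map_sub, sub_eq_zero] at same_value
  exact (hg (J.rangeRestrict x)).trans same_value

theorem stmt_7_general (ν : ℝ[X] →ₗ[ℝ] ℝ) (C K : ℝ) (hK : 0 ≤ K) (m : ℕ)
    (hν : ∀ q : ℕ, 1 ≤ q → ∀ h : ℝ[X], h.natDegree ≤ q →
      ∀ B : ℝ, (∀ x : ℝ, |x| ≤ K → |h.eval x| ≤ B) → |ν h| ≤ C * (q : ℝ) ^ m * B) :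
    ∃ (ν' : (ℝ → ℝ) →ₗ[ℝ] ℝ) (C' : ℝ), 0 ≤ C' ∧
      (∀ h : ℝ[X], ν' (fun x => h.eval x) = ν h) ∧
      ∀ f : ℝ → ℝ, ContDiff ℝ (m + 1 : ℕ) f →
        ∀ B : ℝ, (∀ k ≤ m + 1, ∀ x : ℝ, |x| ≤ K → |iteratedDeriv k f x| ≤ B) →
          |ν' f| ≤ C' * B := by
  have : Nonempty (Set.Icc (-K) K) := ⟨0, by simpa using hK⟩
  let D := jet (m + 1) (Set.Icc (-K) K)
  have hD : ∀ h, |ν h| ≤ _ * ‖D (polynomialToContDiff (m + 1) h)‖ := fun h =>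
    DegreeGrowthBound.abs_apply_le_of_abs_iteratedDeriv_le hν hK fun k hk x hx =>
      abs_iteratedDeriv_le_norm_jet (polynomialToContDiff (m + 1) h) hk (abs_le.1 hx)
  obtain ⟨g, hg⟩ := exists_strongDual_apply_eq_of_norm_le (D ∘ₗ polynomialToContDiff (m + 1)) ν hD
  obtain ⟨ν', hν'⟩ := (g.toLinearMap ∘ₗ D).exists_extend
  have apply_eq (f : contDiffSubmodule (m + 1)) : ν' f = g (D f) := LinearMap.congr_fun hν' f
  refine ⟨ν', ‖g‖, norm_nonneg g, fun h => ?_, fun f hf B hB => ?_⟩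
  · exact (apply_eq (polynomialToContDiff (m + 1) h)).trans (hg h)
  · calc |ν' f| = ‖g (D ⟨f, hf⟩)‖ := congrArg abs (apply_eq ⟨f, hf⟩)
      _ ≤ ‖g‖ * ‖D ⟨f, hf⟩‖ := g.le_opNorm _
      _ ≤ ‖g‖ * B := by
          gcongr
          exact norm_jet_le fun k hk x hx => hB k hk x (abs_le.2 hx)

/-- **Extension of polynomially bounded functionals to compactly supported
distributions.**  If a linear functional `ν` on real polynomials satisfies
`|ν(h)| ≤ C q^m sup_{|x| ≤ K} |h(x)|` for all polynomials `h` of degree at most `q`,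
then `ν` extends to a linear functional `ν'` on functions that, on smooth functions,
is bounded by a constant times `max_{0 ≤ k ≤ m+1} sup_{|x| ≤ K} |f^(k)(x)|`. -/
theorem stmt_7 (ν : Polynomial ℝ →ₗ[ℝ] ℝ) (C K : ℝ) (hC : 0 ≤ C) (hK : 0 ≤ K) (m : ℕ)
    (hν : ∀ q : ℕ, 1 ≤ q → ∀ h : Polynomial ℝ, h.natDegree ≤ q →
      ∀ B : ℝ, (∀ x : ℝ, |x| ≤ K → |h.eval x| ≤ B) → |ν h| ≤ C * (q : ℝ) ^ m * B) :
    ∃ (ν' : (ℝ → ℝ) →ₗ[ℝ] ℝ) (C' : ℝ), 0 ≤ C' ∧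
      (∀ h : Polynomial ℝ, ν' (fun x => h.eval x) = ν h) ∧
      ∀ f : ℝ → ℝ, ContDiff ℝ (⊤ : ℕ∞) f →
        ∀ B : ℝ, (∀ k ≤ m + 1, ∀ x : ℝ, |x| ≤ K → |iteratedDeriv k f x| ≤ B) →
          |ν' f| ≤ C' * B := by
  obtain ⟨ν', C', hC', hext, hbound⟩ := stmt_7_general ν C K hK m hν
  exact ⟨ν', C', hC', hext, fun f hf => hbound f (hf.of_le (mod_cast le_top))⟩
end

section
/- Let p ≥ q be positive integers, f a real polynomial of degree at most p, g_q(x) = ∏_{j=1}^q (1 − (jx)²)^⌊q/j⌋, and r = f/g_q. Then for all m ≥ 1, (1/m!) · sup_{|x| ≤ 1/(cp)} |r^(m)(x)| ≤ (e^(−p) (Cp)^m + (Cp)^(2m)/m!) · sup over the set I_q = {1/N : N ∈ ℤ, |N| > q} of |r|, where c, C are universal constants. -/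
/-- The Weingarten denominator `g_q(x) = ∏_{j=1}^q (1 - (jx)²)^⌊q/j⌋`. -/
noncomputable def gq (q : ℕ) (x : ℝ) : ℝ :=
  ∏ j ∈ Finset.Icc 1 q, (1 - ((j : ℝ) * x) ^ 2) ^ (q / j)

/-!
Extend `r = f / g_q` to a disc of radius `δ ≍ 1 / p` about `x` in the complex plane. There Lagrange
interpolation at the points `1 / N` with `N ≍ p` gives `‖f‖ ≤ B e ^ (16 p)`, while
`‖g_q‖ ≥ e ^ (-q)`, so that `‖r‖ ≤ B e ^ (17 p)`.

Rescale to the unit disc and put `a = 17 p`. The function `e ^ (-a z²) r z` is at most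
`B e ^ (2 a |im z|)` on the unit circle. If `S` bounds it on the diameter, the maximum principle on
the two half discs extends the bound `S e ^ (2 a |im z|)` inwards, so by the Schwarz lemma the
function is Lipschitz with constant `O(a S)` at the point where `S` is attained, unless that point
is within `O(1 / a)` of an end of the diameter, where the function is `O(B)` anyway. The points
`1 / N` form an `O(1 / a)`-net of the diameter, hence `S ≤ 2 B`.

Thus `‖r‖ ≤ 2 B e ^ (3 a ρ / δ)` at distance `ρ` from `x`. Cauchy's estimate on the circle of radius
`δ m / a`, or of radius `δ` if `m ≥ a`, finishes the proof.
-/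

section

open Complex Metric Set
open scoped Topology

section ExponentialGrowth

variable {E : Type*} [NormedAddCommGroup E] [NormedSpace ℂ E]

theorem norm_le_mul_exp_im_of_frontier {U : Set ℂ} {f : ℂ → E} {S κ : ℝ}
    (hU : Bornology.IsBounded U) (hd : DiffContOnCl ℂ f U)
    (hf : ∀ z ∈ frontier U, ‖f z‖ ≤ S * Real.exp (κ * z.im)) {z : ℂ} (hz : z ∈ closure U) :
    ‖f z‖ ≤ S * Real.exp (κ * z.im) := by
  have norm_twist : ∀ w, ‖cexp (κ * I * w) • f w‖ = ‖f w‖ / Real.exp (κ * w.im) := fun w ↦ by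
    simp [norm_smul, norm_exp, Real.exp_neg, div_eq_inv_mul]
  have hexp : Differentiable ℂ fun w : ℂ ↦ cexp (κ * I * w) := by fun_prop
  have hmax : ‖cexp (κ * I * z) • f z‖ ≤ S :=
    norm_le_of_forall_mem_frontier_norm_le hU (hexp.diffContOnCl.smul hd)
      (fun w hw ↦ by rw [norm_twist, div_le_iff₀ (Real.exp_pos _)]; exact hf w hw) hz
  rwa [norm_twist, div_le_iff₀ (Real.exp_pos _)] at hmax

theorem norm_le_mul_exp_abs_im_of_frontier {U : Set ℂ} {f : ℂ → E} {S κ : ℝ}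
    (hU : Bornology.IsBounded U) (hd : DiffContOnCl ℂ f U)
    (hreal : ∀ z ∈ closure U, z.im = 0 → ‖f z‖ ≤ S)
    (hf : ∀ z ∈ frontier U, ‖f z‖ ≤ S * Real.exp (κ * |z.im|)) {z : ℂ} (hz : z ∈ closure U) :
    ‖f z‖ ≤ S * Real.exp (κ * |z.im|) := by
  rcases lt_trichotomy z.im 0 with hneg | hzero | hpos
  · have hlower := norm_le_mul_exp_im_of_frontier (U := {w : ℂ | w.im < 0} ∩ U) (f := f) (S := S)
      (κ := -κ) (hU.subset inter_subset_right) (hd.mono inter_subset_right) (fun w hw ↦ ?_)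
      ((isOpen_lt continuous_im continuous_const).inter_closure ⟨hneg, hz⟩)
    · simpa [abs_of_neg hneg] using hlower
    · rcases frontier_inter_subset _ _ hw with ⟨him, hwU⟩ | ⟨him, hwU⟩
      · rw [frontier_setOfPred_im_lt] at him
        simpa [him.out] using hreal w hwU him
      · rw [closure_setOfPred_im_lt] at him
        simpa [abs_of_nonpos him.out] using hf w hwU
  · simpa [hzero] using hreal z hz hzero
  · have hupper := norm_le_mul_exp_im_of_frontier (U := {w : ℂ | 0 < w.im} ∩ U) (f := f) (S := S)
      (κ := κ) (hU.subset inter_subset_right) (hd.mono inter_subset_right) (fun w hw ↦ ?_)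
      ((isOpen_lt continuous_const continuous_im).inter_closure ⟨hpos, hz⟩)
    · rwa [abs_of_pos hpos]
    · rcases frontier_inter_subset _ _ hw with ⟨him, hwU⟩ | ⟨him, hwU⟩
      · rw [frontier_setOfPred_lt_im] at him
        simpa [him.out] using hreal w hwU him
      · rw [closure_setOfPred_lt_im] at him
        simpa [abs_of_nonneg him.out] using hf w hwU

theorem exp_natCast_le_three_pow (n : ℕ) : Real.exp n ≤ 3 ^ n := by
  rw [← Real.exp_one_pow]
  gcongr
  exact Real.exp_one_lt_three.le

theorem exp_half_le_two : Real.exp (1 / 2) ≤ 2 := by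
  rw [Real.exp_half, Real.sqrt_le_left two_pos.le]
  linarith [Real.exp_one_lt_three]

theorem norm_sub_le_of_norm_le_exp_abs_im {f : ℂ → E} {κ S x u : ℝ} (hκ : 0 < κ)
    (hd : DifferentiableOn ℂ f (ball (x : ℂ) (1 / (2 * κ))))
    (hf : ∀ z ∈ ball (x : ℂ) (1 / (2 * κ)), ‖f z‖ ≤ S * Real.exp (κ * |z.im|))
    (hu : |u - x| < 1 / (2 * κ)) :
    ‖f u - f x‖ ≤ 6 * κ * S * |u - x| := by
  have hx : ‖f x‖ ≤ S := by simpa using hf x (mem_ball_self (by positivity))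
  have hS : 0 ≤ S := (norm_nonneg _).trans hx
  have hmaps : MapsTo f (ball (x : ℂ) (1 / (2 * κ))) (closedBall (f x) (3 * S)) := fun z hz ↦ by
    have him : κ * |z.im| ≤ 1 / 2 := by
      have : |z.im| ≤ 1 / (2 * κ) := by
        simpa using (abs_im_le_norm (z - x)).trans (mem_ball_iff_norm.1 hz).le
      calc κ * |z.im| ≤ κ * (1 / (2 * κ)) := by gcongr
        _ = 1 / 2 := by field_simp
    have hz2 : ‖f z‖ ≤ S * 2 :=
      (hf z hz).trans (by gcongr; exact (Real.exp_le_exp.2 him).trans exp_half_le_two)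
    rw [mem_closedBall_iff_norm]
    linarith [norm_sub_le (f z) (f x)]
  have hdist : dist (u : ℂ) x = |u - x| := by
    rw [isometry_ofReal.dist_eq, Real.dist_eq]
  have hschwarz := dist_le_div_mul_dist_of_mapsTo_ball hd hmaps (z := (u : ℂ))
    (by rwa [mem_ball, hdist])
  rw [dist_eq_norm, hdist] at hschwarz
  refine hschwarz.trans_eq ?_
  field_simp
  ring

theorem norm_le_mul_exp_abs_im_of_sphere {f : ℂ → E} {a B S : ℝ} (ha : 0 ≤ a) (hBS : B ≤ S)
    (hd : DiffContOnCl ℂ f (ball 0 1)) (hreal : ∀ x : ℝ, |x| ≤ 1 → ‖f x‖ ≤ S)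
    (hf : ∀ z ∈ sphere (0 : ℂ) 1, ‖f z‖ ≤ B * Real.exp (a * (1 - z.re ^ 2 + z.im ^ 2)))
    {z : ℂ} (hz : z ∈ closedBall 0 1) : ‖f z‖ ≤ S * Real.exp (2 * a * |z.im|) := by
  have hS : 0 ≤ S := (norm_nonneg _).trans (hreal 0 (by simp))
  rw [← closure_ball _ one_ne_zero] at hz
  refine norm_le_mul_exp_abs_im_of_frontier isBounded_ball hd (fun w hw him ↦ ?_)
    (fun w hw ↦ ?_) hz
  · rw [closure_ball _ one_ne_zero, mem_closedBall_zero_iff] at hw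
    have hw_real : ((w.re : ℝ) : ℂ) = w := Complex.ext rfl him.symm
    simpa only [hw_real] using hreal w.re ((abs_re_le_norm w).trans hw)
  · rw [frontier_ball _ one_ne_zero] at hw
    have hcircle : w.re ^ 2 + w.im ^ 2 = 1 := by
      rw [sq, sq, ← normSq_apply, normSq_eq_norm_sq, mem_sphere_zero_iff_norm.1 hw, one_pow]
    have him : w.im ^ 2 ≤ |w.im| := by
      rw [← sq_abs]
      exact pow_le_of_le_one (abs_nonneg _) (by nlinarith [sq_abs w.im]) two_ne_zero
    have hexponent : a * (1 - w.re ^ 2 + w.im ^ 2) ≤ 2 * a * |w.im| :=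
      calc a * (1 - w.re ^ 2 + w.im ^ 2) = 2 * a * w.im ^ 2 := by rw [← hcircle]; ring
        _ ≤ 2 * a * |w.im| := by gcongr
    exact (hf w hw).trans (by gcongr)

theorem norm_ofReal_le_two_mul_of_net {f : ℂ → E} {a B : ℝ} (ha : 0 < a)
    (hd : DiffContOnCl ℂ f (ball 0 1))
    (hf : ∀ z ∈ closedBall (0 : ℂ) 1, ‖f z‖ ≤ B * Real.exp (a * (1 - z.re ^ 2 + z.im ^ 2)))
    (hnet : ∀ t : ℝ, |t| ≤ 1 → ∃ u : ℝ, |u - t| ≤ 1 / (24 * a) ∧ ‖f u‖ ≤ B)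
    {x : ℝ} (hx : |x| ≤ 1) : ‖f x‖ ≤ 2 * B := by
  have hB : 0 ≤ B := by
    obtain ⟨u, -, hu⟩ := hnet 0 (by simp)
    exact (norm_nonneg _).trans hu
  have hmem : ∀ {t : ℝ}, |t| ≤ 1 → (t : ℂ) ∈ closedBall (0 : ℂ) 1 := fun ht ↦ by
    simpa using ht
  obtain ⟨y, hy, hmax⟩ : ∃ y ∈ Icc (-1 : ℝ) 1, IsMaxOn (fun t : ℝ ↦ ‖f t‖) (Icc (-1) 1) y := by
    refine isCompact_Icc.exists_isMaxOn ⟨0, by norm_num⟩ (ContinuousOn.norm ?_)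
    exact hd.continuousOn_ball.comp continuous_ofReal.continuousOn fun t ht ↦ hmem (abs_le.2 ht)
  suffices h : ‖f y‖ ≤ 2 * B from (hmax (abs_le.1 hx)).trans h
  have hy1 : |y| ≤ 1 := abs_le.2 hy
  rcases le_or_gt (1 - |y|) (1 / (4 * a)) with hedge | hinner
  · have hexponent : a * (1 - y ^ 2) ≤ 1 / 2 :=
      calc a * (1 - y ^ 2) = a * (1 - |y|) * (1 + |y|) := by rw [← sq_abs]; ring
        _ ≤ a * (1 / (4 * a)) * (1 + 1) := by gcongr
        _ = 1 / 2 := by field_simp; norm_num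
    calc ‖f y‖ ≤ B * Real.exp (a * (1 - y ^ 2)) := by simpa using hf y (hmem hy1)
      _ ≤ B * 2 := by gcongr; exact (Real.exp_le_exp.2 hexponent).trans exp_half_le_two
      _ = 2 * B := mul_comm _ _
  · by_contra! hcontra
    have hgrowth := fun z (hz : z ∈ closedBall (0 : ℂ) 1) ↦
      norm_le_mul_exp_abs_im_of_sphere ha.le (by linarith : B ≤ ‖f y‖) hd
        (fun t ht ↦ hmax (abs_le.1 ht)) (fun w hw ↦ hf w (sphere_subset_closedBall hw)) hz
    have hsub : ball (y : ℂ) (1 / (2 * (2 * a))) ⊆ ball 0 1 := by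
      refine ball_subset_ball' ?_
      rw [dist_zero_right, norm_real, Real.norm_eq_abs, ← mul_assoc]
      linarith
    obtain ⟨u, huy, hu⟩ := hnet y hy1
    have hlip : ‖f u - f y‖ ≤ ‖f y‖ / 2 :=
      calc ‖f u - f y‖ ≤ 6 * (2 * a) * ‖f y‖ * |u - y| :=
            norm_sub_le_of_norm_le_exp_abs_im (by positivity) (hd.differentiableOn.mono hsub)
              (fun z hz ↦ hgrowth z (ball_subset_closedBall (hsub hz)))
              (huy.trans_lt (by gcongr 1 / ?_; linarith))
        _ ≤ 6 * (2 * a) * ‖f y‖ * (1 / (24 * a)) := by gcongr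
        _ = ‖f y‖ / 2 := by field_simp; ring
    linarith [norm_sub_norm_le (f y) (f u), norm_sub_rev (f y) (f u)]

theorem norm_le_two_mul_exp_of_net_unit {f : ℂ → E} {a B : ℝ} (ha : 0 < a)
    (hd : DiffContOnCl ℂ f (ball 0 1)) (hf : ∀ z ∈ closedBall (0 : ℂ) 1, ‖f z‖ ≤ B * Real.exp a)
    (hnet : ∀ t : ℝ, |t| ≤ 1 → ∃ u : ℝ, |u - t| ≤ 1 / (24 * a) ∧ ‖f u‖ ≤ B)
    {z : ℂ} (hz : z ∈ closedBall 0 1) : ‖f z‖ ≤ 2 * B * Real.exp (3 * a * ‖z‖) := by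
  have hB : 0 ≤ B := by
    obtain ⟨u, -, hu⟩ := hnet 0 (by simp)
    exact (norm_nonneg _).trans hu
  let H : ℂ → E := fun w ↦ cexp (-(a * w ^ 2)) • f w
  have norm_H : ∀ w, ‖H w‖ = Real.exp (-(a * (w.re ^ 2 - w.im ^ 2))) * ‖f w‖ := fun w ↦ by
    simp [H, norm_smul, norm_exp, sq]
  have hexp : Differentiable ℂ fun w : ℂ ↦ cexp (-(a * w ^ 2)) := by fun_prop
  have hHd : DiffContOnCl ℂ H (ball 0 1) := hexp.diffContOnCl.smul hd
  have hH : ∀ w ∈ closedBall (0 : ℂ) 1,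
      ‖H w‖ ≤ B * Real.exp (a * (1 - w.re ^ 2 + w.im ^ 2)) := fun w hw ↦
    calc ‖H w‖ ≤ Real.exp (-(a * (w.re ^ 2 - w.im ^ 2))) * (B * Real.exp a) := by
          rw [norm_H]; gcongr; exact hf w hw
      _ = B * Real.exp (a * (1 - w.re ^ 2 + w.im ^ 2)) := by
          rw [mul_left_comm, ← Real.exp_add]; ring_nf
  have hHnet : ∀ t : ℝ, |t| ≤ 1 → ∃ u : ℝ, |u - t| ≤ 1 / (24 * a) ∧ ‖H u‖ ≤ B := fun t ht ↦ by
    obtain ⟨u, hut, hu⟩ := hnet t ht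
    have hdamp : Real.exp (-(a * u ^ 2)) ≤ 1 := Real.exp_le_one_iff.2 (by nlinarith [sq_nonneg u])
    refine ⟨u, hut, le_trans ?_ hu⟩
    simpa [norm_H] using mul_le_of_le_one_left (norm_nonneg (f u)) hdamp
  have hgrowth := norm_le_mul_exp_abs_im_of_sphere ha.le (by linarith : B ≤ 2 * B)
    hHd (fun x hx ↦ norm_ofReal_le_two_mul_of_net ha hHd hH hHnet hx)
    (fun w hw ↦ hH w (sphere_subset_closedBall hw)) hz
  have hexponent : a * (z.re ^ 2 - z.im ^ 2) + 2 * a * |z.im| ≤ 3 * a * ‖z‖ := by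
    have hre : z.re ^ 2 ≤ ‖z‖ := by
      rw [← sq_abs]
      nlinarith [abs_nonneg z.re, abs_re_le_norm z, mem_closedBall_zero_iff.1 hz]
    nlinarith [abs_im_le_norm z, sq_nonneg z.im]
  calc ‖f z‖ = Real.exp (a * (z.re ^ 2 - z.im ^ 2)) * ‖H z‖ := by
        rw [norm_H, ← mul_assoc, ← Real.exp_add, add_neg_cancel, Real.exp_zero, one_mul]
    _ ≤ Real.exp (a * (z.re ^ 2 - z.im ^ 2)) * (2 * B * Real.exp (2 * a * |z.im|)) := by gcongr
    _ = 2 * B * Real.exp (a * (z.re ^ 2 - z.im ^ 2) + 2 * a * |z.im|) := by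
        rw [Real.exp_add]; ring
    _ ≤ 2 * B * Real.exp (3 * a * ‖z‖) := by gcongr

theorem norm_le_two_mul_exp_of_net {f : ℂ → E} {a B x δ : ℝ} (ha : 0 < a) (hδ : 0 < δ)
    (hd : DiffContOnCl ℂ f (ball (x : ℂ) δ))
    (hf : ∀ z ∈ closedBall (x : ℂ) δ, ‖f z‖ ≤ B * Real.exp a)
    (hnet : ∀ t : ℝ, |t - x| ≤ δ → ∃ u : ℝ, |u - t| ≤ δ / (24 * a) ∧ ‖f u‖ ≤ B)
    {z : ℂ} (hz : z ∈ closedBall (x : ℂ) δ) :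
    ‖f z‖ ≤ 2 * B * Real.exp (3 * a * (‖z - x‖ / δ)) := by
  have hδ' : (δ : ℂ) ≠ 0 := ofReal_ne_zero.2 hδ.ne'
  have norm_rescale : ∀ w : ℂ, ‖x + δ * w - x‖ = δ * ‖w‖ := fun w ↦ by
    rw [add_sub_cancel_left, norm_mul, norm_real, Real.norm_of_nonneg hδ.le]
  have hrescale : DiffContOnCl ℂ (fun w : ℂ ↦ x + δ * w) (ball 0 1) :=
    Differentiable.diffContOnCl (by fun_prop)
  have hz' : (z - x) / δ ∈ closedBall (0 : ℂ) 1 := by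
    rw [mem_closedBall_zero_iff, norm_div, norm_real, Real.norm_of_nonneg hδ.le, div_le_one hδ]
    exact mem_closedBall_iff_norm.1 hz
  have hunit := norm_le_two_mul_exp_of_net_unit (f := fun w ↦ f (x + δ * w)) ha
    (hd.comp hrescale fun w hw ↦ ?_) (fun w hw ↦ hf _ ?_) (fun t ht ↦ ?_) hz'
  · simpa [mul_div_cancel₀ _ hδ', abs_of_pos hδ] using hunit
  · rw [mem_ball_iff_norm, norm_rescale]
    exact mul_lt_of_lt_one_right hδ (mem_ball_zero_iff.1 hw)
  · rw [mem_closedBall_iff_norm, norm_rescale]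
    exact mul_le_of_le_one_right hδ.le (mem_closedBall_zero_iff.1 hw)
  · obtain ⟨u, hut, hu⟩ := hnet (x + δ * t) <| by
      rw [add_sub_cancel_left, abs_mul, abs_of_pos hδ]
      exact mul_le_of_le_one_right hδ.le ht
    refine ⟨(u - x) / δ, ?_, by simpa [mul_div_cancel₀ _ hδ'] using hu⟩
    calc |(u - x) / δ - t| = |u - (x + δ * t)| / δ := by
          rw [← abs_of_pos hδ, ← abs_div, abs_of_pos hδ]; congr 1; field_simp; ring
      _ ≤ δ / (24 * a) / δ := by gcongr
      _ = 1 / (24 * a) := by field_simp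

variable [CompleteSpace E] {m : ℕ}

theorem norm_iteratedDeriv_le_of_norm_le_exp {f : ℂ → E} {a B δ : ℝ} {c : ℂ} (ham : a ≤ m)
    (hδ : 0 < δ) (hd : DiffContOnCl ℂ f (ball c δ))
    (hf : ∀ z ∈ closedBall c δ, ‖f z‖ ≤ B * Real.exp a) :
    ‖iteratedDeriv m f c‖ ≤ m.factorial * Real.exp (-a) * (9 / δ) ^ m * B := by
  have hB : 0 ≤ B := nonneg_of_mul_nonneg_left
    ((norm_nonneg _).trans (hf c (mem_closedBall_self hδ.le))) (Real.exp_pos a)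
  have hexp : Real.exp a ≤ Real.exp (-a) * 9 ^ m :=
    calc Real.exp a ≤ Real.exp (-a + (2 * m : ℕ)) := Real.exp_le_exp.2 (by push_cast; linarith)
      _ ≤ Real.exp (-a) * 3 ^ (2 * m) := by
          rw [Real.exp_add]
          gcongr
          exact exp_natCast_le_three_pow _
      _ = Real.exp (-a) * 9 ^ m := by rw [pow_mul]; norm_num
  calc ‖iteratedDeriv m f c‖ ≤ m.factorial * (B * Real.exp a) / δ ^ m :=
        norm_iteratedDeriv_le_of_forall_mem_sphere_norm_le m hδ hd
          fun z hz ↦ hf z (sphere_subset_closedBall hz)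
    _ ≤ m.factorial * (B * (Real.exp (-a) * 9 ^ m)) / δ ^ m := by gcongr
    _ = m.factorial * Real.exp (-a) * (9 / δ) ^ m * B := by rw [div_pow]; ring

theorem norm_iteratedDeriv_le_of_norm_le_exp_norm_sub {f : ℂ → E} {a A δ : ℝ} {c : ℂ}
    (hm : m ≠ 0) (hma : m ≤ a) (hδ : 0 < δ) (hd : DiffContOnCl ℂ f (ball c δ))
    (hf : ∀ z ∈ closedBall c δ, ‖f z‖ ≤ A * Real.exp (3 * a * (‖z - c‖ / δ))) :
    ‖iteratedDeriv m f c‖ ≤ (27 * a / δ) ^ m * A := by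
  have hA : 0 ≤ A := by
    simpa using (norm_nonneg _).trans (hf c (mem_closedBall_self hδ.le))
  have hm_pos : (0 : ℝ) < m := by positivity
  have ha : 0 < a := hm_pos.trans_le hma
  have hρδ : δ * (m / a) ≤ δ := mul_le_of_le_one_right hδ.le ((div_le_one ha).2 hma)
  have hsphere : ∀ z ∈ sphere c (δ * (m / a)), ‖f z‖ ≤ A * 27 ^ m := fun z hz ↦ by
    have hexponent : 3 * a * (‖z - c‖ / δ) = (3 * m : ℕ) := by
      rw [mem_sphere_iff_norm.1 hz]
      push_cast
      field_simp
    calc ‖f z‖ ≤ A * Real.exp (3 * m : ℕ) := by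
          rw [← hexponent]
          exact hf z (closedBall_subset_closedBall hρδ (sphere_subset_closedBall hz))
      _ ≤ A * 3 ^ (3 * m) := by gcongr; exact exp_natCast_le_three_pow _
      _ = A * 27 ^ m := by rw [pow_mul]; norm_num
  have hfact : (m.factorial : ℝ) ≤ m ^ m := mod_cast m.factorial_le_pow
  calc ‖iteratedDeriv m f c‖ ≤ m.factorial * (A * 27 ^ m) / (δ * (m / a)) ^ m :=
        norm_iteratedDeriv_le_of_forall_mem_sphere_norm_le m (by positivity)
          (hd.mono (ball_subset_ball hρδ)) hsphere
    _ ≤ m ^ m * (A * 27 ^ m) / (δ * (m / a)) ^ m := by gcongr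
    _ = (27 * a / δ) ^ m * A := by
        simp only [div_pow, mul_pow]
        field_simp

theorem norm_iteratedDeriv_le_of_net {f : ℂ → E} {a B x δ : ℝ} (ha : 0 < a) (hδ : 0 < δ)
    (hd : DiffContOnCl ℂ f (ball (x : ℂ) δ))
    (hf : ∀ z ∈ closedBall (x : ℂ) δ, ‖f z‖ ≤ B * Real.exp a)
    (hnet : ∀ t : ℝ, |t - x| ≤ δ → ∃ u : ℝ, |u - t| ≤ δ / (24 * a) ∧ ‖f u‖ ≤ B) (hm : m ≠ 0) :
    ‖iteratedDeriv m f x‖ ≤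
      (m.factorial * Real.exp (-a) * (9 / δ) ^ m + (54 * a / δ) ^ m) * B := by
  have hB : 0 ≤ B := by
    obtain ⟨u, -, hu⟩ := hnet x (by simpa using hδ.le)
    exact (norm_nonneg _).trans hu
  rw [add_mul]
  rcases le_total a m with ham | hma
  · exact (norm_iteratedDeriv_le_of_norm_le_exp ham hδ hd hf).trans
      (le_add_of_nonneg_right (by positivity))
  · calc ‖iteratedDeriv m f x‖ ≤ (27 * a / δ) ^ m * (2 * B) :=
          norm_iteratedDeriv_le_of_norm_le_exp_norm_sub hm hma hδ hd
            fun z hz ↦ norm_le_two_mul_exp_of_net ha hδ hd hf hnet hz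
      _ ≤ (27 * a / δ) ^ m * (2 ^ m * B) := by gcongr; exact le_self_pow₀ one_le_two hm
      _ = (54 * a / δ) ^ m * B := by rw [← mul_assoc, ← mul_pow]; ring_nf
      _ ≤ _ := le_add_of_nonneg_left (by positivity)

end ExponentialGrowth

theorem iteratedDeriv_re_comp_ofReal {f : ℂ → ℂ} (m : ℕ) {x : ℝ} (hf : AnalyticAt ℂ f x) :
    iteratedDeriv m (fun y : ℝ ↦ (f y).re) x = (iteratedDeriv m f x).re := by
  induction m generalizing x with
  | zero => simp
  | succ m ih =>
    have hnear : iteratedDeriv m (fun y : ℝ ↦ (f y).re) =ᶠ[𝓝 x]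
        fun y : ℝ ↦ (iteratedDeriv m f y).re := by
      filter_upwards [continuous_ofReal.continuousAt.eventually hf.eventually_analyticAt]
        with y hy using ih hy
    have hdiff : DifferentiableAt ℂ (iteratedDeriv m f) x := by
      rw [iteratedDeriv_eq_iterate]
      exact (hf.iterated_deriv m).differentiableAt
    rw [iteratedDeriv_succ, iteratedDeriv_succ, hnear.deriv_eq]
    exact hdiff.hasDerivAt.real_of_complex.deriv

section LagrangeInterpolation

open Polynomial

theorem prod_abs_sub_erase_range {n i : ℕ} (hi : i ≤ n) :
    ∏ j ∈ (Finset.range (n + 1)).erase i, |(i : ℝ) - j| = i.factorial * (n - i).factorial := by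
  induction n, hi using Nat.le_induction with
  | base =>
    rw [Finset.range_add_one, Finset.erase_insert Finset.notMem_range_self,
      ← Nat.descFactorial_self, Nat.descFactorial_eq_prod_range, Nat.sub_self,
      Nat.factorial_zero, Nat.cast_one, mul_one, Nat.cast_prod]
    refine Finset.prod_congr rfl fun j hj ↦ ?_
    rw [← Nat.cast_sub (Finset.mem_range.1 hj).le, Nat.abs_cast]
  | succ n hin ih =>
    have hlast : |(i : ℝ) - (n + 1 : ℕ)| = (n + 1 - i : ℕ) := by
      rw [abs_sub_comm, ← Nat.cast_sub (by lia), Nat.abs_cast]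
    rw [Finset.range_add_one, Finset.erase_insert_of_ne (by lia),
      Finset.prod_insert (by simp), ih, hlast, Nat.succ_sub hin, Nat.factorial_succ]
    push_cast
    ring

variable {𝕜 : Type*} [NormedField 𝕜] {n : ℕ} {v : ℕ → 𝕜} {z : 𝕜} {σ ρ B : ℝ}

theorem norm_eval_lagrangeBasis_le (hσ : 0 < σ)
    (hsep : ∀ i ≤ n, ∀ j ≤ n, σ * |(i : ℝ) - j| ≤ ‖v i - v j‖)
    (hz : ∀ j ≤ n, ‖z - v j‖ ≤ ρ) {i : ℕ} (hi : i ≤ n) :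
    ‖(Lagrange.basis (Finset.range (n + 1)) v i).eval z‖ ≤
      (ρ / σ) ^ n / (i.factorial * (n - i).factorial) := by
  have hfactor : ∀ j ∈ (Finset.range (n + 1)).erase i,
      ‖(Lagrange.basisDivisor (v i) (v j)).eval z‖ ≤ ρ / σ / |(i : ℝ) - j| := fun j hj ↦ by
    obtain ⟨hji, hj⟩ := Finset.mem_erase.1 hj
    have hjn : j ≤ n := Finset.mem_range_succ_iff.1 hj
    have hpos : 0 < |(i : ℝ) - j| := abs_pos.2 (sub_ne_zero.2 (mod_cast hji.symm))
    have hρ : 0 ≤ ρ := (norm_nonneg _).trans (hz j hjn)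
    calc ‖(Lagrange.basisDivisor (v i) (v j)).eval z‖ = ‖z - v j‖ / ‖v i - v j‖ := by
          simp [Lagrange.basisDivisor, div_eq_inv_mul]
      _ ≤ ρ / (σ * |(i : ℝ) - j|) := by gcongr; exacts [hz j hjn, hsep i hi j hjn]
      _ = ρ / σ / |(i : ℝ) - j| := (div_div _ _ _).symm
  calc ‖(Lagrange.basis (Finset.range (n + 1)) v i).eval z‖
      = ∏ j ∈ (Finset.range (n + 1)).erase i, ‖(Lagrange.basisDivisor (v i) (v j)).eval z‖ := by
        rw [Lagrange.basis, eval_prod, norm_prod]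
    _ ≤ ∏ j ∈ (Finset.range (n + 1)).erase i, ρ / σ / |(i : ℝ) - j| :=
        Finset.prod_le_prod (fun _ _ ↦ norm_nonneg _) hfactor
    _ = (ρ / σ) ^ n / (i.factorial * (n - i).factorial) := by
        rw [Finset.prod_div_distrib, prod_abs_sub_erase_range hi, Finset.prod_const,
          Finset.card_erase_of_mem (Finset.mem_range_succ_iff.2 hi), Finset.card_range,
          Nat.add_one_sub_one]

theorem norm_eval_le_of_separated_nodes {f : 𝕜[X]} (hf : f.natDegree ≤ n) (hσ : 0 < σ)
    (hsep : ∀ i ≤ n, ∀ j ≤ n, σ * |(i : ℝ) - j| ≤ ‖v i - v j‖)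
    (hB : ∀ i ≤ n, ‖f.eval (v i)‖ ≤ B) (hz : ∀ i ≤ n, ‖z - v i‖ ≤ ρ) :
    ‖f.eval z‖ ≤ B * ((2 * ρ / σ) ^ n / n.factorial) := by
  have hB0 : 0 ≤ B := (norm_nonneg _).trans (hB 0 n.zero_le)
  have hinj : InjOn v (Finset.range (n + 1)) := fun i hi j hj hij ↦ by
    have hle := hsep i (Finset.mem_range_succ_iff.1 hi) j (Finset.mem_range_succ_iff.1 hj)
    rw [hij, sub_self, norm_zero] at hle
    have hij' := abs_nonpos_iff.1 (nonpos_of_mul_nonpos_right hle hσ)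
    exact Nat.cast_injective (R := ℝ) (sub_eq_zero.1 hij')
  have hdeg : f.degree < (Finset.range (n + 1)).card := by
    rw [Finset.card_range]
    exact (degree_le_of_natDegree_le hf).trans_lt (mod_cast n.lt_succ_self)
  rw [Lagrange.eq_interpolate hinj hdeg, Lagrange.interpolate_apply, eval_finsetSum]
  calc ‖∑ i ∈ Finset.range (n + 1), (C (f.eval (v i)) * Lagrange.basis _ v i).eval z‖
      ≤ ∑ i ∈ Finset.range (n + 1), B * ((ρ / σ) ^ n / (i.factorial * (n - i).factorial)) := by
        refine norm_sum_le_of_le _ fun i hi ↦ ?_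
        have hin : i ≤ n := Finset.mem_range_succ_iff.1 hi
        rw [eval_mul, eval_C, norm_mul]
        gcongr
        exacts [hB i hin, norm_eval_lagrangeBasis_le hσ hsep hz hin]
    _ = ∑ i ∈ Finset.range (n + 1), B * ((ρ / σ) ^ n / n.factorial) * n.choose i := by
        refine Finset.sum_congr rfl fun i hi ↦ ?_
        rw [Nat.cast_choose ℝ (Finset.mem_range_succ_iff.1 hi)]
        field_simp
    _ = B * ((2 * ρ / σ) ^ n / n.factorial) := by
        rw [← Finset.mul_sum, ← Nat.cast_sum, Nat.sum_range_choose, mul_div_assoc, mul_pow]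
        push_cast
        ring

end LagrangeInterpolation

section Reciprocals

theorem norm_eval_le_of_reciprocal_nodes {f : Polynomial ℂ} {p : ℕ} {K B : ℝ} (hp : 0 < p)
    (hK : 0 < K) (hf : f.natDegree ≤ p)
    (hB : ∀ i ≤ p, ‖f.eval ((1 / (K * (p + i)) : ℝ) : ℂ)‖ ≤ B) {z : ℂ} (hz : ‖z‖ ≤ 1 / (K * p)) :
    ‖f.eval z‖ ≤ B * Real.exp (16 * p) := by
  have : (0 : ℝ) < p := mod_cast hp
  have hB0 : 0 ≤ B := (norm_nonneg _).trans (hB 0 p.zero_le)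
  have hsep : ∀ i ≤ p, ∀ j ≤ p, 1 / (4 * K * p ^ 2) * |(i : ℝ) - j| ≤
      ‖((1 / (K * (p + i)) : ℝ) : ℂ) - ((1 / (K * (p + j)) : ℝ) : ℂ)‖ := fun i hi j hj ↦ by
    have hi' : (i : ℝ) ≤ p := mod_cast hi
    have hj' : (j : ℝ) ≤ p := mod_cast hj
    have hdiff : 1 / (K * (p + i)) - 1 / (K * (p + j)) = (j - i) / (K * ((p + i) * (p + j))) := by
      field_simp
      ring
    rw [← ofReal_sub, norm_real, Real.norm_eq_abs, hdiff, abs_div, abs_sub_comm, one_div_mul_eq_div,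
      abs_of_pos (by positivity : 0 < K * ((p + i) * (p + j) : ℝ))]
    refine div_le_div_of_nonneg_left (abs_nonneg _) (by positivity) ?_
    calc K * ((p + i) * (p + j)) ≤ K * ((p + p) * (p + p)) := by gcongr
      _ = 4 * K * p ^ 2 := by ring
  have hdist : ∀ i ≤ p, ‖z - ((1 / (K * (p + i)) : ℝ) : ℂ)‖ ≤ 2 / (K * p) := fun i _ ↦ by
    have hnode : ‖((1 / (K * (p + i)) : ℝ) : ℂ)‖ ≤ 1 / (K * p) := by
      rw [norm_real, Real.norm_of_nonneg (by positivity)]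
      gcongr
      exact le_add_of_nonneg_right i.cast_nonneg
    calc _ ≤ 1 / (K * p) + 1 / (K * p) := norm_sub_le_of_le hz hnode
      _ = 2 / (K * p) := by ring
  have hratio : 2 * (2 / (K * p)) / (1 / (4 * K * p ^ 2)) = 16 * p := by
    field_simp
    norm_num
  calc ‖f.eval z‖ ≤ B * ((16 * p) ^ p / p.factorial) := by
        rw [← hratio]
        exact norm_eval_le_of_separated_nodes hf (by positivity) hsep hB hdist
    _ ≤ B * Real.exp (16 * p) := by
        gcongr
        exact Real.pow_div_factorial_le_exp _ (by positivity) _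

theorem sub_one_div_ceil_mem_Icc {s : ℝ} (hs : 0 < s) :
    s - 1 / ⌈1 / s⌉ ∈ Icc 0 (s ^ 2) := by
  have hle : 1 / s ≤ ⌈1 / s⌉ := Int.le_ceil _
  have hlt : (⌈1 / s⌉ : ℝ) < 1 / s + 1 := Int.ceil_lt_add_one _
  generalize (⌈1 / s⌉ : ℝ) = N at hle hlt
  have hN : 0 < N := lt_of_lt_of_le (by positivity) hle
  have hNs : 1 / N ≤ s := (one_div_le hs hN).1 hle
  refine ⟨sub_nonneg.2 hNs, ?_⟩
  calc s - 1 / N = s * (1 / N) * (N - 1 / s) := by field_simp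
    _ ≤ s * s * 1 := by gcongr; linarith
    _ = s ^ 2 := by ring

theorem exists_int_abs_one_div_sub_le {K y : ℝ} (hK : 1 ≤ K) (hy : |y| ≤ 1 / K) :
    ∃ N : ℤ, K ≤ |(N : ℝ)| ∧ |1 / N - y| ≤ 1 / K ^ 2 := by
  wlog hy0 : 0 ≤ y generalizing y
  · obtain ⟨N, hKN, hN⟩ := this (y := -y) (by rwa [abs_neg]) (by linarith)
    refine ⟨-N, by simpa using hKN, ?_⟩
    rw [← abs_neg]
    convert hN using 2
    push_cast
    ring
  have hK0 : 0 < K := by linarith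
  have hKK : 1 / K ^ 2 ≤ 1 / K := by gcongr; exact le_self_pow₀ hK two_ne_zero
  -- Raising `y` to `1 / K ^ 2` keeps `1 / s` meaningful and costs no more than the allowed error.
  set s := max y (1 / K ^ 2)
  have hs0 : 0 < s := lt_max_of_lt_right (by positivity)
  have hsK : s ≤ 1 / K := max_le ((le_abs_self y).trans hy) hKK
  have hs2 : s ^ 2 ≤ 1 / K ^ 2 := by
    rw [← one_div_pow]
    gcongr
  have hKN : K ≤ (⌈1 / s⌉ : ℝ) := ((le_one_div hs0 hK0).1 hsK).trans (Int.le_ceil _)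
  have hN0 : 0 < 1 / (⌈1 / s⌉ : ℝ) := one_div_pos.2 (hK0.trans_le hKN)
  obtain ⟨hlow, hupp⟩ := sub_one_div_ceil_mem_Icc hs0
  refine ⟨⌈1 / s⌉, hKN.trans (le_abs_self _), abs_le.2 ⟨?_, ?_⟩⟩
  · linarith [le_max_left y (1 / K ^ 2), hN0]
  · rcases max_cases y (1 / K ^ 2) with ⟨h, -⟩ | ⟨h, -⟩ <;> linarith [hN0]

end Reciprocals

section Denominator

/-- The holomorphic extension of `gq q` to the complex plane. -/
noncomputable def gqComplex (q : ℕ) (z : ℂ) : ℂ :=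
  ∏ j ∈ Finset.Icc 1 q, (1 - ((j : ℂ) * z) ^ 2) ^ (q / j)

theorem gqComplex_ofReal (q : ℕ) (x : ℝ) : gqComplex q x = gq q x := by
  simp [gqComplex, gq]

theorem differentiable_gqComplex (q : ℕ) : Differentiable ℂ (gqComplex q) := by
  unfold gqComplex
  fun_prop

theorem three_quarters_pow_le_norm_gqComplex {q : ℕ} {z : ℂ} (hz : q * ‖z‖ ≤ 1 / 2) :
    (3 / 4) ^ q ≤ ‖gqComplex q z‖ := by
  have hfactor : ∀ j ∈ Finset.Icc 1 q, (3 / 4 : ℝ) ≤ ‖(1 - ((j : ℂ) * z) ^ 2) ^ (q / j)‖ := by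
    intro j hj
    have hjq : (j : ℝ) ≤ q := mod_cast (Finset.mem_Icc.1 hj).2
    have hdiv : ((q / j : ℕ) : ℝ) * j ≤ q := mod_cast Nat.div_mul_le_self q j
    have hsmall : j * ‖z‖ ≤ 1 / 2 := le_trans (by gcongr) hz
    have hsum : ((q / j : ℕ) : ℝ) * (j * ‖z‖) ^ 2 ≤ 1 / 4 :=
      calc ((q / j : ℕ) : ℝ) * (j * ‖z‖) ^ 2 = (((q / j : ℕ) : ℝ) * j * ‖z‖) * (j * ‖z‖) := by ring
        _ ≤ (q * ‖z‖) * (1 / 2) := by gcongr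
        _ ≤ 1 / 4 := by linarith
    have hsq : (j * ‖z‖) ^ 2 ≤ 1 := pow_le_one₀ (by positivity) (by linarith)
    have hbernoulli : 1 + ((q / j : ℕ) : ℝ) * -(j * ‖z‖) ^ 2 ≤ (1 + -(j * ‖z‖) ^ 2) ^ (q / j) :=
      one_add_mul_le_pow (by linarith) _
    have hnorm : 1 + -(j * ‖z‖) ^ 2 ≤ ‖1 - ((j : ℂ) * z) ^ 2‖ := by
      have htriangle := norm_sub_norm_le (1 : ℂ) (((j : ℂ) * z) ^ 2)
      rw [norm_one, norm_pow, norm_mul, norm_natCast] at htriangle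
      rwa [← sub_eq_add_neg]
    calc (3 / 4 : ℝ) ≤ (1 + -(j * ‖z‖) ^ 2) ^ (q / j) := by linarith
      _ ≤ ‖(1 - ((j : ℂ) * z) ^ 2) ^ (q / j)‖ := by
        rw [norm_pow]
        gcongr
        linarith
  calc (3 / 4 : ℝ) ^ q = ∏ j ∈ Finset.Icc 1 q, (3 / 4 : ℝ) := by
        rw [Finset.prod_const, Nat.card_Icc, Nat.add_sub_cancel]
    _ ≤ ‖gqComplex q z‖ := by
        rw [gqComplex, norm_prod]
        exact Finset.prod_le_prod (fun _ _ ↦ by norm_num) hfactor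

theorem exp_neg_le_norm_gqComplex {q : ℕ} {z : ℂ} (hz : q * ‖z‖ ≤ 1 / 2) :
    Real.exp (-q) ≤ ‖gqComplex q z‖ := by
  have hbase : Real.exp (-1) ≤ 3 / 4 := by
    rw [Real.exp_neg]
    exact (inv_anti₀ two_pos Real.exp_one_gt_two.le).trans (by norm_num)
  calc Real.exp (-q) = Real.exp (-1) ^ q := by rw [← Real.exp_nat_mul, mul_neg_one]
    _ ≤ (3 / 4) ^ q := by gcongr
    _ ≤ ‖gqComplex q z‖ := three_quarters_pow_le_norm_gqComplex hz

theorem gq_mem_Ioc {q : ℕ} {x : ℝ} (hx : q * |x| < 1) : gq q x ∈ Ioc 0 1 := by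
  have hfactor : ∀ j ∈ Finset.Icc 1 q, 1 - (j * x) ^ 2 ∈ Ioc 0 1 := fun j hj ↦ by
    have hjq : (j : ℝ) ≤ q := mod_cast (Finset.mem_Icc.1 hj).2
    have hjx : |j * x| < 1 := by
      rw [abs_mul, Nat.abs_cast]
      exact lt_of_le_of_lt (by gcongr) hx
    exact ⟨sub_pos.2 ((sq_lt_one_iff_abs_lt_one _).2 hjx), sub_le_self _ (sq_nonneg _)⟩
  exact ⟨Finset.prod_pos fun j hj ↦ pow_pos (hfactor j hj).1 _,
    Finset.prod_le_one (fun j hj ↦ pow_nonneg (hfactor j hj).1.le _)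
      fun j hj ↦ pow_le_one₀ (hfactor j hj).1.le (hfactor j hj).2⟩

end Denominator

section RationalFunction

open Polynomial

/-- The holomorphic extension of `f / gq q` to the complex plane, away from the zeros of the
denominator. -/
noncomputable def complexRatio (f : ℝ[X]) (q : ℕ) (z : ℂ) : ℂ :=
  aeval z f / gqComplex q z

variable {f : ℝ[X]} {p q : ℕ} {B : ℝ}

theorem complexRatio_ofReal (x : ℝ) : complexRatio f q x = (f.eval x / gq q x : ℝ) := by
  rw [complexRatio, gqComplex_ofReal, ofReal_div, ← coe_algebraMap,
    aeval_algebraMap_apply_eq_algebraMap_eval]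

theorem analyticAt_complexRatio {z : ℂ} (hz : q * ‖z‖ ≤ 1 / 2) :
    AnalyticAt ℂ (complexRatio f q) z := by
  have hne : gqComplex q z ≠ 0 :=
    norm_pos_iff.1 ((Real.exp_pos _).trans_le (exp_neg_le_norm_gqComplex hz))
  exact (f.differentiable_aeval.analyticAt z).div ((differentiable_gqComplex q).analyticAt z) hne

theorem abs_iteratedDeriv_eval_div_gq_le {x : ℝ} (m : ℕ) (hx : q * |x| ≤ 1 / 2) :
    |iteratedDeriv m (fun y ↦ f.eval y / gq q y) x| ≤ ‖iteratedDeriv m (complexRatio f q) x‖ := by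
  have hre : (fun y ↦ f.eval y / gq q y) = fun y : ℝ ↦ (complexRatio f q y).re := by
    funext y
    rw [complexRatio_ofReal, ofReal_re]
  rw [hre, iteratedDeriv_re_comp_ofReal m (analyticAt_complexRatio (by rwa [norm_real]))]
  exact abs_re_le_norm _

theorem natCast_mul_le_one_div {c r : ℝ} (hp : 0 < p) (hqp : q ≤ p) (hr0 : 0 ≤ r)
    (hr : r ≤ 1 / (c * p)) : q * r ≤ 1 / c :=
  calc q * r ≤ p * (1 / (c * p)) := by gcongr
    _ = 1 / c := by field_simp

theorem abs_eval_one_div_intCast_le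
    (hB : ∀ N : ℤ, (q : ℤ) < |N| → |f.eval (1 / (N : ℝ)) / gq q (1 / (N : ℝ))| ≤ B)
    {N : ℤ} (hN : (q : ℤ) < |N|) : |f.eval (1 / (N : ℝ))| ≤ B := by
  have hqN : (q : ℝ) < |(N : ℝ)| := mod_cast hN
  have hN0 : 0 < |(N : ℝ)| := q.cast_nonneg.trans_lt hqN
  obtain ⟨hg0, hg1⟩ := gq_mem_Ioc (q := q) (x := 1 / N) <| by
    rwa [abs_one_div, mul_one_div, div_lt_one hN0]
  refine le_trans ?_ (hB N hN)
  rw [abs_div, abs_of_pos hg0]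
  exact le_div_self (abs_nonneg _) hg0 hg1

theorem norm_complexRatio_le
    (hB : ∀ N : ℤ, (q : ℤ) < |N| → |f.eval (1 / (N : ℝ)) / gq q (1 / (N : ℝ))| ≤ B)
    (hp : 0 < p) (hqp : q ≤ p) (hf : f.natDegree ≤ p)
    {z : ℂ} (hz : ‖z‖ ≤ 1 / (816 * p)) : ‖complexRatio f q z‖ ≤ B * Real.exp (17 * p) := by
  have hnode : ∀ i ≤ p, ‖(f.map (algebraMap ℝ ℂ)).eval ((1 / (816 * (p + i)) : ℝ) : ℂ)‖ ≤ B :=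
    fun i _ ↦ by
      have hN := abs_eval_one_div_intCast_le hB (N := 816 * (p + i)) (lt_abs.2 (.inl (by lia)))
      push_cast at hN
      rwa [eval_map_algebraMap, ← coe_algebraMap, aeval_algebraMap_apply_eq_algebraMap_eval,
        coe_algebraMap, norm_real]
  have hnum : ‖aeval z f‖ ≤ B * Real.exp (16 * p) := by
    rw [← eval_map_algebraMap]
    exact norm_eval_le_of_reciprocal_nodes hp (by norm_num) (natDegree_map_le.trans hf) hnode hz
  have hden : Real.exp (-p) ≤ ‖gqComplex q z‖ :=
    (Real.exp_le_exp.2 (neg_le_neg (mod_cast hqp))).trans <| exp_neg_le_norm_gqComplex <|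
      (natCast_mul_le_one_div hp hqp (norm_nonneg z) hz).trans (by norm_num)
  calc ‖complexRatio f q z‖ = ‖aeval z f‖ / ‖gqComplex q z‖ := norm_div _ _
    _ ≤ B * Real.exp (16 * p) / Real.exp (-p) :=
        div_le_div₀ ((norm_nonneg _).trans hnum) hnum (Real.exp_pos _) hden
    _ = B * Real.exp (17 * p) := by rw [mul_div_assoc, ← Real.exp_sub]; ring_nf

theorem exists_abs_sub_le_norm_complexRatio_le
    (hB : ∀ N : ℤ, (q : ℤ) < |N| → |f.eval (1 / (N : ℝ)) / gq q (1 / (N : ℝ))| ≤ B)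
    (hp : 0 < p) (hqp : q ≤ p) {K t : ℝ} (hK : 1 < K) (ht : |t| ≤ 1 / (K * p)) :
    ∃ u : ℝ, |u - t| ≤ 1 / (K * p) ^ 2 ∧ ‖complexRatio f q u‖ ≤ B := by
  have hp1 : (1 : ℝ) ≤ p := mod_cast hp
  have hpK : (p : ℝ) < K * p := lt_mul_of_one_lt_left (by linarith) hK
  obtain ⟨N, hKN, hNt⟩ := exists_int_abs_one_div_sub_le (hp1.trans hpK.le) ht
  have hqN : (q : ℝ) < |(N : ℝ)| := (Nat.cast_le.2 hqp).trans_lt (hpK.trans_le hKN)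
  refine ⟨1 / N, hNt, ?_⟩
  rw [complexRatio_ofReal, norm_real]
  exact hB N (mod_cast hqN)

theorem norm_iteratedDeriv_complexRatio_le
    (hB : ∀ N : ℤ, (q : ℤ) < |N| → |f.eval (1 / (N : ℝ)) / gq q (1 / (N : ℝ))| ≤ B)
    (hp : 0 < p) (hqp : q ≤ p) (hf : f.natDegree ≤ p)
    {m : ℕ} (hm : m ≠ 0) {x : ℝ} (hx : |x| ≤ 1 / (1632 * p)) :
    ‖iteratedDeriv m (complexRatio f q) x‖ ≤
      (m.factorial * Real.exp (-(17 * p)) * (14688 * p) ^ m + (1224 * p) ^ (2 * m)) * B := by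
  have : (0 : ℝ) < p := mod_cast hp
  have hδ : (0 : ℝ) < 1 / (1632 * p) := by positivity
  have hdouble : 1 / (1632 * p) + 1 / (1632 * p) = 1 / (816 * (p : ℝ)) := by field_simp; norm_num
  have hball : ∀ z ∈ closedBall (x : ℂ) (1 / (1632 * p)), ‖z‖ ≤ 1 / (816 * p) := fun z hz ↦ by
    have hx' : ‖(x : ℂ)‖ ≤ 1 / (1632 * p) := by rwa [norm_real]
    linarith [norm_le_norm_add_norm_sub' z x, mem_closedBall_iff_norm.1 hz]
  have hdiff : DiffContOnCl ℂ (complexRatio f q) (ball (x : ℂ) (1 / (1632 * p))) := by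
    refine DifferentiableOn.diffContOnCl fun z hz ↦ ?_
    rw [closure_ball _ hδ.ne'] at hz
    have hqz := natCast_mul_le_one_div hp hqp (norm_nonneg z) (hball z hz)
    have han : AnalyticAt ℂ (complexRatio f q) z :=
      analyticAt_complexRatio (hqz.trans (by norm_num))
    exact han.differentiableAt.differentiableWithinAt
  -- `816 = 2 * 24 * 17`: the mesh `1 / (816 * p) ^ 2` is exactly the one required below.
  have hnet : ∀ t : ℝ, |t - x| ≤ 1 / (1632 * p) →
      ∃ u : ℝ, |u - t| ≤ 1 / (1632 * p) / (24 * (17 * p)) ∧ ‖complexRatio f q u‖ ≤ B :=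
    fun t ht ↦ by
      obtain ⟨u, hut, hu⟩ := exists_abs_sub_le_norm_complexRatio_le hB hp hqp (K := 816) (t := t)
        (by norm_num) (by linarith [abs_sub_abs_le_abs_sub t x])
      exact ⟨u, hut.trans_eq (by field_simp; norm_num), hu⟩
  convert norm_iteratedDeriv_le_of_net (by positivity) hδ hdiff
    (fun z hz ↦ norm_complexRatio_le hB hp hqp hf (hball z hz)) hnet hm using 3
  · congr 2
    field_simp
    norm_num
  · rw [pow_mul]
    congr 1
    field_simp
    norm_num

end RationalFunction

end

/-- **Rational Bernstein inequality.**  There are universal constants `c, C > 0` so that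
for `p ≥ q ≥ 1`, any real polynomial `f` of degree at most `p`, and `r = f/g_q` bounded
by `B` on `I_q = {1/N : N ∈ ℤ, |N| > q}`, one has for all `m ≥ 1` and `|x| ≤ 1/(cp)`:
`|r^(m)(x)|/m! ≤ (e^(-p)(Cp)^m + (Cp)^(2m)/m!)·B`. -/
theorem stmt_10 :
    ∃ c C : ℝ, 0 < c ∧ 0 < C ∧
      ∀ (p q : ℕ), 1 ≤ q → q ≤ p →
      ∀ f : Polynomial ℝ, f.natDegree ≤ p →
      ∀ B : ℝ,
        (∀ N : ℤ, (q : ℤ) < |N| →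
          |f.eval (1 / (N : ℝ)) / gq q (1 / (N : ℝ))| ≤ B) →
        ∀ m : ℕ, 1 ≤ m → ∀ x : ℝ, |x| ≤ 1 / (c * p) →
          |iteratedDeriv m (fun y => f.eval y / gq q y) x| / (m.factorial : ℝ) ≤
            (Real.exp (-(p : ℝ)) * (C * p) ^ m +
              (C * p) ^ (2 * m) / (m.factorial : ℝ)) * B := by
  refine ⟨1632, 14688, by norm_num, by norm_num, fun p q hq hqp f hf B hB m hm x hx ↦ ?_⟩
  have hp : 0 < p := hq.trans hqp
  have hB0 : 0 ≤ B := (abs_nonneg _).trans (hB (q + 1) (lt_abs.2 (.inl (lt_add_one _))))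
  have hqx : q * |x| ≤ 1 / 2 :=
    (natCast_mul_le_one_div hp hqp (abs_nonneg x) hx).trans (by norm_num)
  have hbound := (abs_iteratedDeriv_eval_div_gq_le m hqx).trans
    (norm_iteratedDeriv_complexRatio_le hB hp hqp hf (Nat.one_le_iff_ne_zero.1 hm) hx)
  calc |iteratedDeriv m (fun y ↦ f.eval y / gq q y) x| / m.factorial
      ≤ (m.factorial * Real.exp (-(17 * p)) * (14688 * p) ^ m + (1224 * p) ^ (2 * m)) * B /
          m.factorial := by gcongr
    _ = (Real.exp (-(17 * p)) * (14688 * p) ^ m + (1224 * p) ^ (2 * m) / m.factorial) * B := by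
        field_simp
    _ ≤ (Real.exp (-p) * (14688 * p) ^ m + (14688 * p) ^ (2 * m) / m.factorial) * B := by
        gcongr
        · linarith [p.cast_nonneg (α := ℝ)]
        · norm_num
end
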